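/- arXiv:1105.3895 — 6 statements merged into one kernel-verified Lean document; each statement's English description precedes it below -/
import Mathlib

section
/- There is an absolute constant C such that for every integer n ≥ 3 there exists an infinitely differentiable 1-periodic function h : ℝ → ℝ with 0 ≤ h ≤ 1, h(t) = 1 for all t ∈ [1/n, 1/2 − 1/n], h(t) = 0 for all t ∈ [1/2, 1], ∑_{b∈ℤ} |ĥ(b)| ≤ C log n, and ∑_{|b| > n³} |ĥ(b)| ≤ 2^{−n}, where ĥ(b) = ∫₀¹ h(t) e^{−2πibt} dt. -/
/-- The `b`-th Fourier coefficient `∫₀¹ h(t) e^{-2πibt} dt` of a 1-periodic function. -/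
noncomputable def fourierCoeff01 (h : ℝ → ℂ) (b : ℤ) : ℂ :=
  ∫ t in (0:ℝ)..1, h t * Complex.exp (-(2 * Real.pi * Complex.I * b * t))

open MeasureTheory Set FourierTransform

/-- A smooth monotone step from `0` (on `t ≤ 0`) to `1` (on `t ≥ a`). -/
structure SmoothStep (H : ℝ → ℝ) (a : ℝ) : Prop where
  smooth : ContDiff ℝ (⊤ : ℕ∞) H
  mono : Monotone H
  zero : ∀ t, t ≤ 0 → H t = 0
  one : ∀ t, a ≤ t → H t = 1

namespace SmoothStep

variable {H : ℝ → ℝ} {a : ℝ}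

lemma nonneg (hH : SmoothStep H a) (t : ℝ) : 0 ≤ H t := by
  rw [← hH.zero (min t 0) (min_le_right _ _)]
  exact hH.mono (min_le_left _ _)

lemma le_one (hH : SmoothStep H a) (t : ℝ) : H t ≤ 1 := by
  rw [← hH.one (max t a) (le_max_right _ _)]
  exact hH.mono (le_max_left _ _)

lemma a_pos (hH : SmoothStep H a) : 0 < a := by
  by_contra h
  have h1 := hH.zero a (not_lt.mp h)
  have h2 := hH.one a le_rfl
  linarith

lemma diff (hH : SmoothStep H a) : Differentiable ℝ H :=
  hH.smooth.differentiable (by simp)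

lemma deriv_cont (hH : SmoothStep H a) : Continuous (deriv H) :=
  hH.smooth.continuous_deriv (by simp)

lemma deriv_nonneg (hH : SmoothStep H a) (t : ℝ) : 0 ≤ deriv H t :=
  hH.mono.deriv_nonneg

lemma deriv_support (hH : SmoothStep H a) : Function.support (deriv H) ⊆ Ioc 0 a := by
  have key : ∀ t, t ∉ Icc 0 a → deriv H t = 0 := by
    intro t ht
    rw [mem_Icc, not_and_or, not_le, not_le] at ht
    rcases ht with ht | ht
    · have : H =ᶠ[nhds t] fun _ => 0 := by
        filter_upwards [Iio_mem_nhds ht] with s hs using hH.zero s (le_of_lt hs)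
      rw [this.deriv_eq]; simp
    · have : H =ᶠ[nhds t] fun _ => 1 := by
        filter_upwards [Ioi_mem_nhds ht] with s hs using hH.one s (le_of_lt hs)
      rw [this.deriv_eq]; simp
  intro t ht
  have h1 : t ∈ Icc 0 a := by
    by_contra h
    exact ht (key t h)
  refine ⟨lt_of_le_of_ne h1.1 ?_, h1.2⟩
  rintro rfl
  apply ht
  have h2 : IsLocalMin H 0 := by
    filter_upwards with s
    rw [hH.zero 0 le_rfl]
    exact hH.nonneg s
  exact h2.deriv_eq_zero

lemma integrable_deriv (hH : SmoothStep H a) : Integrable (deriv H) :=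
  hH.deriv_cont.integrable_of_hasCompactSupport
    (HasCompactSupport.of_support_subset_isCompact isCompact_Icc
      (hH.deriv_support.trans Ioc_subset_Icc_self))

lemma integral_deriv (hH : SmoothStep H a) : ∫ t, deriv H t = 1 := by
  rw [← intervalIntegral.integral_eq_integral_of_support_subset hH.deriv_support,
    intervalIntegral.integral_deriv_eq_sub (fun x _ => hH.diff x)
      (hH.deriv_cont.intervalIntegrable _ _), hH.one a le_rfl, hH.zero 0 le_rfl]
  simp

lemma fourier_deriv_le_one (hH : SmoothStep H a) (x : ℝ) :
    ‖𝓕 (fun t => ((deriv H t : ℝ) : ℂ)) x‖ ≤ 1 := by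
  rw [Real.fourier_real_eq]
  refine (norm_integral_le_integral_norm _).trans ?_
  rw [← hH.integral_deriv]
  apply le_of_eq
  congr 1
  ext t
  rw [Circle.norm_smul, Complex.norm_real, Real.norm_of_nonneg (hH.deriv_nonneg t)]

lemma fourier_diff_le (hH : SmoothStep H a) {w : ℝ} (hw : 0 ≤ w) (x : ℝ) :
    2 * Real.pi * |x| * ‖𝓕 (fun t => ((H t - H (t - w) : ℝ) : ℂ)) x‖
      ≤ 2 * ‖𝓕 (fun t => ((deriv H t : ℝ) : ℂ)) x‖ := by
  set u : ℝ → ℂ := fun t => ((H t - H (t - w) : ℝ) : ℂ) with hu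
  have hd : ∀ t, HasDerivAt u ((deriv H t : ℝ) - (deriv H (t - w) : ℝ) : ℂ) t := by
    intro t
    have h1 := (hH.diff t).hasDerivAt
    have h2 := ((hH.diff (t - w)).hasDerivAt).comp_sub_const t w
    have h3 := (h1.sub h2).ofReal_comp
    rw [Complex.ofReal_sub] at h3
    exact h3
  have hdu : deriv u = fun t => ((deriv H t : ℝ) - (deriv H (t - w) : ℝ) : ℂ) := by
    ext t; exact (hd t).deriv
  have hi1 : Integrable (fun t => ((deriv H t : ℝ) : ℂ)) := hH.integrable_deriv.ofReal
  have hi2 : Integrable (fun t => ((deriv H (t - w) : ℝ) : ℂ)) := hi1.comp_sub_right w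
  have hui : Integrable u := by
    have hc : Continuous u := by
      have := hH.smooth.continuous
      fun_prop
    apply hc.integrable_of_hasCompactSupport
    apply HasCompactSupport.of_support_subset_isCompact (isCompact_Icc (a := 0) (b := a + w))
    intro t ht
    by_contra h
    apply ht
    rw [mem_Icc, not_and_or, not_le, not_le] at h
    rcases h with h | h
    · simp [hu, hH.zero t h.le, hH.zero (t - w) (by linarith)]
    · simp [hu, hH.one t (by linarith), hH.one (t - w) (by linarith)]
  have hF := congrFun (Real.fourier_deriv hui (fun t => (hd t).differentiableAt)
    (by rw [hdu]; exact hi1.sub hi2)) x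
  have hn : ‖𝓕 (deriv u) x‖ = 2 * Real.pi * |x| * ‖𝓕 u x‖ := by
    rw [hF, norm_smul]
    simp [abs_of_pos Real.pi_pos]
  rw [← hn, hdu, Real.fourier_real_eq]
  have hj1 := (Real.fourierIntegral_convergent_iff (μ := volume) x).2 hi1
  have hj2 := (Real.fourierIntegral_convergent_iff (μ := volume) x).2 hi2
  have hsub : (∫ v, Real.fourierChar (-(v * x)) •
      ((deriv H v : ℝ) - (deriv H (v - w) : ℝ) : ℂ))
      = 𝓕 (fun t => ((deriv H t : ℝ) : ℂ)) x
        - 𝓕 (fun t => ((deriv H (t - w) : ℝ) : ℂ)) x := by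
    rw [Real.fourier_real_eq, Real.fourier_real_eq, ← integral_sub]
    · simp only [smul_sub]
    · simpa [mul_comm] using hj1
    · simpa [mul_comm] using hj2
  have htr : ‖𝓕 (fun t => ((deriv H (t - w) : ℝ) : ℂ)) x‖
      = ‖𝓕 (fun t => ((deriv H t : ℝ) : ℂ)) x‖ := by
    have := congrFun (Fourier.fourierIntegral_comp_add_right Real.fourierChar volume
      (fun t => ((deriv H t : ℝ) : ℂ)) (-w)) x
    have h3 : 𝓕 (fun t => ((deriv H (t - w) : ℝ) : ℂ)) x
      = Real.fourierChar (-w * x) • 𝓕 (fun t => ((deriv H t : ℝ) : ℂ)) x := by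
      simpa [Fourier.fourierIntegral_def, Real.fourier_real_eq, Function.comp_def,
        sub_eq_add_neg] using this
    rw [h3, Circle.norm_smul]
  rw [hsub]
  refine (norm_sub_le _ _).trans ?_
  rw [htr]; linarith

/-- averaging -/
lemma average (hH : SmoothStep H a) {w : ℝ} (hw : 0 < w) :
    ∃ K, SmoothStep K (a + w) ∧ deriv K = fun t => w⁻¹ * (H t - H (t - w)) := by
  have hc := hH.smooth.continuous
  set G : ℝ → ℝ := fun t => ∫ x in (0:ℝ)..t, H x with hG
  have hGd : ∀ t, HasDerivAt G (H t) t := fun t =>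
    intervalIntegral.integral_hasDerivAt_right (hc.intervalIntegrable _ _)
      (hc.stronglyMeasurableAtFilter _ _) hc.continuousAt
  have hGs : ContDiff ℝ (⊤ : ℕ∞) G := by
    rw [contDiff_infty_iff_deriv]
    refine ⟨fun t => (hGd t).differentiableAt, ?_⟩
    have : deriv G = H := by ext t; exact (hGd t).deriv
    rw [this]; exact hH.smooth
  have hd : ∀ t, HasDerivAt (fun t => w⁻¹ * (G t - G (t - w))) (w⁻¹ * (H t - H (t - w))) t :=
    fun t => ((hGd t).sub ((hGd (t - w)).comp_sub_const t w)).const_mul _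
  have hsub : ∀ t, G t - G (t - w) = ∫ x in (t - w)..t, H x := fun t =>
    intervalIntegral.integral_interval_sub_left (hc.intervalIntegrable _ _)
      (hc.intervalIntegrable _ _)
  refine ⟨fun t => w⁻¹ * (G t - G (t - w)), ⟨?_, ?_, ?_, ?_⟩, ?_⟩
  · fun_prop
  · apply monotone_of_deriv_nonneg (fun t => (hd t).differentiableAt)
    intro t
    rw [(hd t).deriv]
    have := hH.mono (show t - w ≤ t by linarith)
    have : 0 ≤ H t - H (t - w) := by linarith
    positivity
  · intro t ht
    have : ∫ x in (t - w)..t, H x = ∫ x in (t - w)..t, (0:ℝ) := by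
      apply intervalIntegral.integral_congr
      intro x hx
      rw [uIcc_of_le (by linarith)] at hx
      exact hH.zero x (hx.2.trans ht)
    simp only [hsub, this]
    simp
  · intro t ht
    have : ∫ x in (t - w)..t, H x = ∫ x in (t - w)..t, (1:ℝ) := by
      apply intervalIntegral.integral_congr
      intro x hx
      rw [uIcc_of_le (by linarith)] at hx
      exact hH.one x (by linarith [hx.1])
    simp only [hsub, this]
    simp [hw.ne']
  · ext t; exact (hd t).deriv

lemma iterate {a w : ℝ} (ha : 0 < a) (hw : 0 < w) (k : ℕ) :
    ∃ H, SmoothStep H (a + k * w) ∧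
      ∀ x : ℝ, x ≠ 0 → ‖𝓕 (fun t => ((deriv H t : ℝ) : ℂ)) x‖ ≤ (1 / (Real.pi * |x| * w)) ^ k := by
  induction k with
  | zero =>
    have h0 : SmoothStep (fun t => Real.smoothTransition (t / a)) (a + (0 : ℕ) * w) := by
      refine ⟨?_, ?_, ?_, ?_⟩
      · exact Real.smoothTransition.contDiff.comp (by fun_prop)
      · intro s t hst
        exact Real.smoothTransition.monotone (by gcongr)
      · intro t ht
        exact Real.smoothTransition.zero_of_nonpos (div_nonpos_of_nonpos_of_nonneg ht ha.le)
      · intro t ht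
        apply Real.smoothTransition.one_of_one_le
        rw [one_le_div ha]
        simpa using ht
    exact ⟨_, h0, fun x _ => by simpa using h0.fourier_deriv_le_one x⟩
  | succ k ih =>
    obtain ⟨H, hH, hb⟩ := ih
    obtain ⟨K, hK, hKd⟩ := hH.average hw
    refine ⟨K, ?_, ?_⟩
    · convert hK using 1
      push_cast; ring
    intro x hx
    have h1 := hH.fourier_diff_le hw.le x
    have h2 := hb x hx
    have h3 : 𝓕 (fun t => ((deriv K t : ℝ) : ℂ)) x
        = ((w⁻¹ : ℝ) : ℂ) * 𝓕 (fun t => ((H t - H (t - w) : ℝ) : ℂ)) x := by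
      rw [hKd, Real.fourier_real_eq, Real.fourier_real_eq, ← integral_const_mul]
      congr 1
      ext t
      simp only [Circle.smul_def, smul_eq_mul]
      push_cast
      ring
    rw [h3, norm_mul, Complex.norm_real, Real.norm_of_nonneg (by positivity), pow_succ]
    have hx' : 0 < |x| := abs_pos.mpr hx
    have hpi := Real.pi_pos
    set q := (1 / (Real.pi * |x| * w)) ^ k
    have h4 : Real.pi * |x| * ‖𝓕 (fun t => ((H t - H (t - w) : ℝ) : ℂ)) x‖ ≤ q := by nlinarith
    have h5 : ‖𝓕 (fun t => ((H t - H (t - w) : ℝ) : ℂ)) x‖ ≤ q / (Real.pi * |x|) := by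
      rw [le_div_iff₀ (by positivity)]; linarith
    calc _ ≤ w⁻¹ * (q / (Real.pi * |x|)) := by gcongr
      _ = _ := by field_simp

end SmoothStep

/-- The cutoff with the pointwise bounds on Fourier coefficients. -/
lemma exists_cutoff_pointwise (n : ℕ) (hn : 3 ≤ n) : ∃ h : ℝ → ℝ,
      ContDiff ℝ (⊤ : ℕ∞) h ∧
      Function.Periodic h 1 ∧
      (∀ t, 0 ≤ h t ∧ h t ≤ 1) ∧
      (∀ t ∈ Set.Icc (1 / (n : ℝ)) (1 / 2 - 1 / (n : ℝ)), h t = 1) ∧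
      (∀ t ∈ Set.Icc (1 / 2 : ℝ) 1, h t = 0) ∧
      (∀ b : ℤ, ‖fourierCoeff01 (fun t => (h t : ℂ)) b‖ ≤ 1) ∧
      (∀ b : ℤ, b ≠ 0 → Real.pi * |(b : ℝ)| * ‖fourierCoeff01 (fun t => (h t : ℂ)) b‖ ≤ 1) ∧
      (∀ b : ℤ, b ≠ 0 → Real.pi * |(b : ℝ)| * ‖fourierCoeff01 (fun t => (h t : ℂ)) b‖ ≤
        (2 * n ^ 2 / (Real.pi * |(b : ℝ)|)) ^ n) := by
  have hn' : (3 : ℝ) ≤ n := by exact_mod_cast hn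
  have hn0 : (0 : ℝ) < n := by linarith
  obtain ⟨H, hH, hHb⟩ := SmoothStep.iterate (a := 1 / (2 * n)) (w := 1 / (2 * n ^ 2))
    (by positivity) (by positivity) n
  rw [show (1 / (2 * n) + n * (1 / (2 * n ^ 2)) : ℝ) = 1 / n by field_simp; norm_num] at hH
  set W : ℝ := 1 / 2 - 1 / n with hWdef
  have hn3 : (1 : ℝ) / n ≤ 1 / 3 := by gcongr
  have hW : 0 ≤ W := by linarith
  set g : ℝ → ℝ := fun t => H t - H (t - W) with hg
  have hgs : ContDiff ℝ (⊤ : ℕ∞) g := by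
    have := hH.smooth
    fun_prop
  have hg0 : ∀ t, 0 ≤ g t := fun t => sub_nonneg.2 (hH.mono (by linarith))
  have hg1 : ∀ t, g t ≤ 1 := fun t => by
    have := hH.le_one t
    have := hH.nonneg (t - W)
    simp only [hg]; linarith
  have hgl : ∀ t, t ≤ 0 → g t = 0 := fun t ht => by
    simp [hg, hH.zero t ht, hH.zero (t - W) (by linarith)]
  have hgr : ∀ t, 1 / 2 ≤ t → g t = 0 := fun t ht => by
    simp only [hg]
    rw [hH.one t (by linarith), hH.one (t - W) (by linarith), sub_self]
  have hloc : ∀ (k : ℤ) (t : ℝ), (k : ℝ) - 1 / 2 < t → t < k + 1 → g (Int.fract t) = g (t - k) := by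
    intro k t h1 h2
    by_cases hk : (k : ℝ) ≤ t
    · have : ⌊t⌋ = k := Int.floor_eq_iff.2 ⟨hk, h2⟩
      rw [Int.fract, this]
    · have : ⌊t⌋ = k - 1 := Int.floor_eq_iff.2 ⟨by push_cast; linarith, by push_cast; linarith⟩
      rw [Int.fract, this, hgl (t - k) (by linarith), hgr _ (by push_cast; linarith)]
  have hcoe : ∀ b : ℤ, fourierCoeff01 (fun t => ((g (Int.fract t) : ℝ) : ℂ)) b
      = 𝓕 (fun t => ((H t - H (t - W) : ℝ) : ℂ)) (b : ℝ) := by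
    intro b
    rw [fourierCoeff01, Real.fourier_real_eq_integral_exp_smul,
      ← intervalIntegral.integral_eq_integral_of_support_subset (a := 0) (b := 1)]
    · apply intervalIntegral.integral_congr
      intro t ht
      rw [uIcc_of_le zero_le_one] at ht
      have : g (Int.fract t) = g t := by
        rcases eq_or_lt_of_le ht.2 with rfl | h
        · simp [hgl 0 le_rfl, hgr 1 (by norm_num)]
        · rw [Int.fract_eq_self.2 ⟨ht.1, h⟩]
      simp only [this, smul_eq_mul]
      rw [mul_comm]
      congr 2
      push_cast
      ring
    · intro t ht
      by_contra hc
      apply ht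
      have : g t = 0 := by
        rw [mem_Ioc, not_and_or, not_lt, not_le] at hc
        rcases hc with hc | hc
        · exact hgl t hc
        · exact hgr t (by linarith)
      simp only [hg] at this
      simp [this]
  have hmain : ∀ b : ℤ, Real.pi * |(b : ℝ)| *
      ‖fourierCoeff01 (fun t => ((g (Int.fract t) : ℝ) : ℂ)) b‖ ≤
      ‖𝓕 (fun t => ((deriv H t : ℝ) : ℂ)) (b : ℝ)‖ := by
    intro b
    rw [hcoe]
    have := hH.fourier_diff_le hW (b : ℝ)
    linarith
  refine ⟨fun t => g (Int.fract t), ?_, ?_, ?_, ?_, ?_, ?_, ?_, ?_⟩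
  · rw [contDiff_iff_contDiffAt]
    intro t
    have h1 : ContDiffAt ℝ (⊤ : ℕ∞) (fun s => g (s - ⌊t⌋)) t := by fun_prop
    apply h1.congr_of_eventuallyEq
    filter_upwards [Ioo_mem_nhds (a := (⌊t⌋ : ℝ) - 1 / 2) (b := ⌊t⌋ + 1) (x := t)
      (by linarith [Int.floor_le t]) (Int.lt_floor_add_one t)] with s hs
    exact hloc _ s hs.1 hs.2
  · intro t; simp
  · intro t; exact ⟨hg0 _, hg1 _⟩
  · intro t ht
    have h0 : (0 : ℝ) < 1 / n := by positivity
    have : Int.fract t = t := Int.fract_eq_self.2 ⟨by linarith [ht.1], by linarith [ht.2]⟩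
    simp only [this, hg]
    rw [hH.one t ht.1, hH.zero (t - W) (by linarith [ht.2]), sub_zero]
  · intro t ht
    rcases eq_or_lt_of_le ht.2 with rfl | h
    · simp [hgl 0 le_rfl]
    · beta_reduce
      rw [Int.fract_eq_self.2 ⟨by linarith [ht.1], h⟩]
      exact hgr t ht.1
  · intro b
    rw [fourierCoeff01]
    have := intervalIntegral.norm_integral_le_of_norm_le_const (a := 0) (b := 1) (C := 1)
      (f := fun t => ((g (Int.fract t) : ℝ) : ℂ) *
        Complex.exp (-(2 * Real.pi * Complex.I * b * t))) ?_
    · simpa using this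
    · intro t _
      rw [norm_mul, show (-(2 * Real.pi * Complex.I * b * t) : ℂ)
        = ((-(2 * Real.pi * b * t) : ℝ) : ℂ) * Complex.I by push_cast; ring,
        Complex.norm_exp_ofReal_mul_I, Complex.norm_real, Real.norm_of_nonneg (hg0 _), mul_one]
      exact hg1 _
  · intro b _
    exact (hmain b).trans (hH.fourier_deriv_le_one _)
  · intro b hb
    refine (hmain b).trans ((hHb b (by exact_mod_cast hb)).trans (le_of_eq ?_))
    congr 1
    field_simp

lemma tsum_int_le_of_nat {f : ℤ → ℝ} {g : ℕ → ℝ} {K : ℝ} (hg : ∀ k, 0 ≤ g k)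
    (hf0 : ∀ b, 0 ≤ f b) (hf : ∀ b, f b ≤ g b.natAbs)
    (hK : ∀ M, ∑ k ∈ Finset.range M, g k ≤ K) : ∑' b, f b ≤ 2 * K := by
  have hs : Summable g := summable_of_sum_range_le hg hK
  have ht : ∑' k, g k ≤ K := Real.tsum_le_of_sum_range_le hg hK
  have hs' : Summable (fun k => g (k + 1)) := (summable_nat_add_iff 1).2 hs
  have ht' : ∑' k, g (k + 1) ≤ ∑' k, g k := by
    have := hs.tsum_eq_zero_add
    have := hg 0
    linarith
  have hz : HasSum (fun b : ℤ => g b.natAbs) (∑' k, g k + ∑' k, g (k + 1)) := by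
    apply HasSum.of_nat_of_neg_add_one
    · simpa using hs.hasSum
    · convert hs'.hasSum using 3
      omega
  have hfs : Summable f := Summable.of_nonneg_of_le hf0 hf hz.summable
  calc ∑' b, f b ≤ ∑' b : ℤ, g b.natAbs := hfs.tsum_le_tsum hf hz.summable
    _ = _ := hz.tsum_eq
    _ ≤ 2 * K := by linarith

lemma sum_tail_le {D : ℝ} (hD : 0 ≤ D) {N : ℕ} (hN : N ≠ 0) (M : ℕ) :
    ∑ k ∈ Finset.range M, (if N < k then D * ((k : ℝ) ^ 2)⁻¹ else 0) ≤ D / N := by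
  rw [← Finset.sum_filter, ← Finset.mul_sum, div_eq_mul_inv]
  apply mul_le_mul_of_nonneg_left _ hD
  calc _ ≤ ∑ k ∈ Finset.Ioc N (max M N), ((k : ℝ) ^ 2)⁻¹ := by
        apply Finset.sum_le_sum_of_subset_of_nonneg
        · intro k hk
          simp only [Finset.mem_filter, Finset.mem_range, Finset.mem_Ioc] at hk ⊢
          omega
        · intros; positivity
    _ ≤ (N : ℝ)⁻¹ - ((max M N : ℕ) : ℝ)⁻¹ := sum_Ioc_inv_sq_le_sub hN (le_max_right _ _)
    _ ≤ _ := by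
        have : 0 ≤ ((max M N : ℕ) : ℝ)⁻¹ := by positivity
        linarith

lemma sum_head_le (N M : ℕ) :
    ∑ k ∈ Finset.range M, (if k ≤ N then ((k : ℝ))⁻¹ else 0) ≤ 1 + Real.log N := by
  have h1 := harmonic_le_one_add_log N
  have h2 : ((harmonic N : ℚ) : ℝ) = ∑ k ∈ Finset.range (N + 1), ((k : ℝ))⁻¹ := by
    rw [Finset.sum_range_succ']
    simp [harmonic]
  rw [← Finset.sum_filter]
  refine le_trans ?_ h1
  rw [h2]
  apply Finset.sum_le_sum_of_subset_of_nonneg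
  · intro k hk
    simp only [Finset.mem_filter, Finset.mem_range] at hk ⊢
    omega
  · intros; positivity

/-- Existence of the smooth cutoff `h₀`: a smooth 1-periodic function, `0 ≤ h ≤ 1`,
equal to `1` on `[1/n, 1/2 - 1/n]`, vanishing on `[1/2, 1]`, with `∑_b |ĥ(b)| ≤ C log n`
and Fourier tail beyond frequency `n ^ 3` at most `2 ^ (-n)`. -/
theorem exists_smooth_cutoff :
    ∃ C : ℝ, ∀ n : ℕ, 3 ≤ n → ∃ h : ℝ → ℝ,
      ContDiff ℝ (⊤ : ℕ∞) h ∧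
      Function.Periodic h 1 ∧
      (∀ t, 0 ≤ h t ∧ h t ≤ 1) ∧
      (∀ t ∈ Set.Icc (1 / (n : ℝ)) (1 / 2 - 1 / (n : ℝ)), h t = 1) ∧
      (∀ t ∈ Set.Icc (1 / 2 : ℝ) 1, h t = 0) ∧
      (∑' b : ℤ, ‖fourierCoeff01 (fun t => (h t : ℂ)) b‖) ≤ C * Real.log n ∧
      (∑' b : ℤ, if ((n : ℤ)) ^ 3 < |b| then
          ‖fourierCoeff01 (fun t => (h t : ℂ)) b‖ else 0)
        ≤ ((2 : ℝ) ^ n)⁻¹ := by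
  refine ⟨12, fun n hn => ?_⟩
  obtain ⟨h, h1, h2, h3, h4, h5, hb0, hb1, hb2⟩ := exists_cutoff_pointwise n hn
  refine ⟨h, h1, h2, h3, h4, h5, ?_⟩
  clear h1 h2 h3 h4 h5
  generalize hf : (fun b : ℤ => ‖fourierCoeff01 (fun t => (h t : ℂ)) b‖) = f
  have hfb : ∀ b, ‖fourierCoeff01 (fun t => (h t : ℂ)) b‖ = f b := fun b => by rw [← hf]
  have hf0 : ∀ b, 0 ≤ f b := fun b => by rw [← hfb]; positivity
  simp only [hfb] at hb0 hb1 hb2 ⊢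
  have hn' : (3 : ℝ) ≤ n := by exact_mod_cast hn
  have hn0 : (0 : ℝ) < n := by linarith
  have hpi := Real.pi_gt_three
  set D : ℝ := 8 * n ^ 2 / 9 * (1 / 4) ^ n with hDdef
  have hD : 0 ≤ D := by positivity
  have hN : n ^ 3 ≠ 0 := by positivity
  have hDN : 2 * (D / ((n ^ 3 : ℕ) : ℝ)) ≤ ((2 : ℝ) ^ n)⁻¹ := by
    have e : 2 * (D / ((n ^ 3 : ℕ) : ℝ)) = 16 / (9 * n) * (1 / 4) ^ n := by
      rw [hDdef]; push_cast; field_simp; norm_num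
    rw [e, ← inv_pow]
    calc (16 / (9 * n) * (1 / 4) ^ n : ℝ) ≤ 1 * (2⁻¹) ^ n := by
          gcongr
          · rw [div_le_one (by positivity)]; linarith
          · norm_num
      _ = _ := one_mul _
  have hcast : ∀ b : ℤ, |(b : ℝ)| = (b.natAbs : ℝ) := fun b => by
    rw [Nat.cast_natAbs]; simp
  have htail : ∀ b : ℤ, n ^ 3 < b.natAbs → f b ≤ D * ((b.natAbs : ℝ) ^ 2)⁻¹ := by
    intro b hb
    have hbne : b ≠ 0 := by rintro rfl; simp at hb
    have := hb2 b hbne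
    rw [hcast] at this
    set k : ℝ := (b.natAbs : ℝ) with hk
    have hkn : (n : ℝ) ^ 3 < k := by rw [hk]; exact_mod_cast hb
    have hk0 : 0 < k := lt_trans (by positivity) hkn
    set q : ℝ := 2 * n ^ 2 / (Real.pi * k) with hq
    have hq0 : 0 ≤ q := by positivity
    have hqk : q ≤ 2 * n ^ 2 / (3 * k) := by rw [hq]; gcongr
    have hq4 : q ≤ 1 / 4 := by
      refine hqk.trans ?_
      rw [div_le_iff₀ (by positivity)]
      nlinarith [sq_nonneg (n : ℝ)]
    obtain ⟨m, rfl⟩ : ∃ m, n = m + 1 := ⟨n - 1, by omega⟩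
    have hqn : q ^ (m + 1) ≤ (1 / 4) ^ m * (2 * ((m + 1 : ℕ) : ℝ) ^ 2 / (3 * k)) := by
      rw [pow_succ]; gcongr
    have h6 : 3 * k * f b ≤ (1 / 4) ^ m * (2 * ((m + 1 : ℕ) : ℝ) ^ 2 / (3 * k)) := by
      refine le_trans ?_ (this.trans hqn)
      have := hf0 b
      gcongr
    have h7 : f b ≤ (1 / 4) ^ m * (2 * ((m + 1 : ℕ) : ℝ) ^ 2 / (3 * k)) / (3 * k) := by
      rw [le_div_iff₀ (by positivity)]; linarith
    refine h7.trans (le_of_eq ?_)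
    rw [hDdef]
    field_simp
    ring
  constructor
  · have hlog : 1 ≤ Real.log n := by
      rw [Real.le_log_iff_exp_le hn0]
      linarith [Real.exp_one_lt_d9]
    have hp : ((2 : ℝ) ^ n)⁻¹ ≤ 1 := inv_le_one_of_one_le₀ (one_le_pow₀ (by norm_num))
    have := tsum_int_le_of_nat (f := f) (g := fun k => (if k = 0 then 1 else 0) +
      (if k ≤ n ^ 3 then ((k : ℝ))⁻¹ else 0) +
      (if n ^ 3 < k then D * ((k : ℝ) ^ 2)⁻¹ else 0))
      (K := 1 + (1 + Real.log (n ^ 3 : ℕ)) + D / (n ^ 3 : ℕ)) ?_ hf0 ?_ ?_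
    · rw [Nat.cast_pow, Real.log_pow] at this
      push_cast at this hDN
      linarith
    · intro k
      positivity
    · intro b
      by_cases hb : b = 0
      · subst hb
        simpa using hb0 0
      · have hb' : b.natAbs ≠ 0 := by simpa using hb
        have hbp : (0 : ℝ) < b.natAbs := by positivity
        by_cases hbn : b.natAbs ≤ n ^ 3
        · simp only [hb', hbn, not_lt.2 hbn, if_true, if_false, zero_add, add_zero]
          have := hb1 b hb
          rw [hcast] at this
          rw [← one_div, le_div_iff₀ hbp]
          have := mul_nonneg hbp.le (hf0 b)
          nlinarith
        · simp only [hb', hbn, not_le.1 hbn, if_true, if_false, zero_add]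
          exact htail b (not_le.1 hbn)
    · intro M
      rw [Finset.sum_add_distrib, Finset.sum_add_distrib]
      refine add_le_add (add_le_add ?_ (sum_head_le _ _)) (sum_tail_le hD hN M)
      rw [Finset.sum_ite_eq']
      split_ifs <;> norm_num
  · refine le_trans (tsum_int_le_of_nat
      (g := fun k => if n ^ 3 < k then D * ((k : ℝ) ^ 2)⁻¹ else 0) ?_ ?_ ?_
      (sum_tail_le hD hN)) hDN
    · intro k; positivity
    · intro b; split_ifs
      · exact hf0 b
      · exact le_rfl
    · intro b
      have : (n : ℤ) ^ 3 < |b| ↔ n ^ 3 < b.natAbs := by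
        rw [Int.abs_eq_natAbs]; exact_mod_cast Iff.rfl
      simp only [this]
      split_ifs with hb
      · exact htail b hb
      · exact le_rfl
end

section
/- There is an absolute constant C such that the following holds. Let n ≥ 2 be an integer, N = 2^n, A ⊆ {1,…,n−1}, M ≥ 1 a real number, and for each j ∈ A let h_j : ℝ → ℂ be a 1-periodic trigonometric polynomial with ∑_{b∈ℤ} |ĥ_j(b)| ≤ M, where ĥ_j(b) = ∫₀¹ h_j(t) e^{−2πibt} dt. Define f(k) = ∏_{j∈A} h_j(k/2^{j+1}) for integers k. Then ∫₀¹ |∑_{0 ≤ k < N} f(k) e(kα)| dα ≤ C M^{|A|} log N. -/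
/-- `h` is a (1-periodic) trigonometric polynomial of degree at most `d`. -/
def IsTrigPolyDeg (h : ℝ → ℂ) (d : ℕ) : Prop :=
  ∃ a : ℤ → ℂ, (∀ b : ℤ, (d : ℤ) < |b| → a b = 0) ∧
    ∀ t : ℝ, h t = ∑ b ∈ Finset.Icc (-(d : ℤ)) (d : ℤ),
      a b * Complex.exp (2 * Real.pi * Complex.I * b * t)

open intervalIntegral in
lemma aux_orth (m : ℤ) : (∫ t in (0:ℝ)..1, Complex.exp ((2 * Real.pi * Complex.I * m) * t))
    = if m = 0 then 1 else 0 := by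
  split_ifs with hm
  · simp [hm]
  · have hc : (2 * Real.pi * Complex.I * m : ℂ) ≠ 0 := by
      simp [hm, Real.pi_ne_zero]
    rw [integral_exp_mul_complex hc]
    have : (2 * Real.pi * Complex.I * m : ℂ) * ((1:ℝ):ℂ) = m * (2 * Real.pi * Complex.I) := by
      push_cast; ring
    rw [this, Complex.exp_int_mul_two_pi_mul_I]
    simp

lemma aux_coeff (h : ℝ → ℂ) (d : ℕ) (a : ℤ → ℂ) (ha : ∀ b : ℤ, (d : ℤ) < |b| → a b = 0)
    (hh : ∀ t : ℝ, h t = ∑ b ∈ Finset.Icc (-(d : ℤ)) (d : ℤ),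
      a b * Complex.exp (2 * Real.pi * Complex.I * b * t)) (b : ℤ) :
    fourierCoeff01 h b = a b := by
  unfold fourierCoeff01
  have h1 : ∀ t : ℝ, h t * Complex.exp (-(2 * Real.pi * Complex.I * b * t))
      = ∑ c ∈ Finset.Icc (-(d : ℤ)) (d : ℤ),
        a c * Complex.exp ((2 * Real.pi * Complex.I * ((c - b : ℤ) : ℂ)) * t) := by
    intro t
    rw [hh, Finset.sum_mul]
    refine Finset.sum_congr rfl fun c _ => ?_
    rw [mul_assoc, ← Complex.exp_add]
    congr 2
    push_cast; ring
  simp_rw [h1]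
  rw [intervalIntegral.integral_finsetSum]
  · simp_rw [intervalIntegral.integral_const_mul, aux_orth, sub_eq_zero]
    simp only [mul_ite, mul_one, mul_zero, Finset.sum_ite_eq', Finset.mem_Icc]
    split_ifs with hb
    · rfl
    · rw [ha]
      rw [← abs_le] at hb
      exact not_le.mp hb
  · intro c _
    exact Continuous.intervalIntegrable (by fun_prop) _ _

lemma aux_sum (h : ℝ → ℂ) (d : ℕ) (a : ℤ → ℂ) (ha : ∀ b : ℤ, (d : ℤ) < |b| → a b = 0)
    (hh : ∀ t : ℝ, h t = ∑ b ∈ Finset.Icc (-(d : ℤ)) (d : ℤ),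
      a b * Complex.exp (2 * Real.pi * Complex.I * b * t)) :
    (∑' b : ℤ, norm (fourierCoeff01 h b)) = ∑ b ∈ Finset.Icc (-(d : ℤ)) (d : ℤ), ‖a b‖ := by
  simp_rw [aux_coeff h d a ha hh]
  apply tsum_eq_sum
  intro b hb
  rw [Finset.mem_Icc, ← abs_le, not_le] at hb
  simp [ha b hb]

/-- One induction step: multiplying by a trigonometric polynomial. -/
lemma aux_step (N : ℕ) (g : ℕ → ℂ) (K : ℝ) (hK : 0 ≤ K)
    (hg : ∀ β : ℝ, (∫ α in (0:ℝ)..1, norm (∑ k ∈ Finset.range N,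
      g k * Complex.exp (2 * Real.pi * Complex.I * k * (α + β)))) ≤ K)
    (s : Finset ℤ) (a : ℤ → ℂ) (M : ℝ) (hM : ∑ b ∈ s, ‖a b‖ ≤ M) (q : ℝ) (β : ℝ) :
    (∫ α in (0:ℝ)..1, norm (∑ k ∈ Finset.range N,
      ((∑ b ∈ s, a b * Complex.exp (2 * Real.pi * Complex.I * b * ((k / q : ℝ) : ℂ))) * g k) *
        Complex.exp (2 * Real.pi * Complex.I * k * (α + β)))) ≤ M * K := by
  have h1 : ∀ α : ℝ, (∑ k ∈ Finset.range N,
      ((∑ b ∈ s, a b * Complex.exp (2 * Real.pi * Complex.I * b * ((k / q : ℝ) : ℂ))) * g k) *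
        Complex.exp (2 * Real.pi * Complex.I * k * (α + β)))
      = ∑ b ∈ s, a b * ∑ k ∈ Finset.range N,
          g k * Complex.exp (2 * Real.pi * Complex.I * k * (α + ((β + b / q : ℝ) : ℂ))) := by
    intro α
    simp_rw [Finset.sum_mul, Finset.mul_sum]
    rw [Finset.sum_comm]
    refine Finset.sum_congr rfl fun b _ => Finset.sum_congr rfl fun k _ => ?_
    have : Complex.exp (2 * Real.pi * Complex.I * k * (α + ((β + b / q : ℝ) : ℂ)))
      = Complex.exp (2 * Real.pi * Complex.I * b * ((k / q : ℝ) : ℂ)) *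
        Complex.exp (2 * Real.pi * Complex.I * k * (α + β)) := by
      rw [← Complex.exp_add]
      congr 1
      push_cast; ring
    rw [this]; ring
  calc _ ≤ ∫ α in (0:ℝ)..1, ∑ b ∈ s, ‖a b‖ * norm (∑ k ∈ Finset.range N,
          g k * Complex.exp (2 * Real.pi * Complex.I * k * (α + ((β + b / q : ℝ) : ℂ)))) := by
        apply intervalIntegral.integral_mono_on zero_le_one
        · exact Continuous.intervalIntegrable (by fun_prop) _ _
        · exact Continuous.intervalIntegrable (by fun_prop) _ _
        · intro α _
          rw [h1]
          refine (norm_sum_le _ _).trans (le_of_eq ?_)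
          simp_rw [norm_mul (a _)]
    _ = ∑ b ∈ s, ‖a b‖ * ∫ α in (0:ℝ)..1, norm (∑ k ∈ Finset.range N,
          g k * Complex.exp (2 * Real.pi * Complex.I * k * (α + ((β + b / q : ℝ) : ℂ)))) := by
        rw [intervalIntegral.integral_finsetSum]
        · simp_rw [intervalIntegral.integral_const_mul]
        · intro c _
          exact Continuous.intervalIntegrable (by fun_prop) _ _
    _ ≤ ∑ b ∈ s, ‖a b‖ * K :=
        Finset.sum_le_sum fun b _ => mul_le_mul_of_nonneg_left (hg _) (norm_nonneg _)
    _ = (∑ b ∈ s, ‖a b‖) * K := by rw [Finset.sum_mul]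
    _ ≤ M * K := by gcongr

/-- The Dirichlet kernel. -/
noncomputable def auxD (N : ℕ) (α : ℝ) : ℝ :=
  norm (∑ k ∈ Finset.range N, Complex.exp (2 * Real.pi * Complex.I * k * α))

lemma auxD_le (N : ℕ) (α : ℝ) : auxD N α ≤ N := by
  unfold auxD
  refine (norm_sum_le _ _).trans ?_
  have : ∀ k : ℕ, ‖Complex.exp (2 * Real.pi * Complex.I * k * α)‖ = 1 := by
    intro k
    have : (2 * Real.pi * Complex.I * k * α : ℂ) = ((2 * Real.pi * k * α : ℝ) : ℂ) * Complex.I := by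
      push_cast; ring
    rw [this, Complex.norm_exp_ofReal_mul_I]
  simp [this]

lemma auxD_sin (N : ℕ) (α : ℝ) : auxD N α * |Real.sin (Real.pi * α)| ≤ 1 := by
  have hn : ∀ k : ℕ, ‖Complex.exp (2 * Real.pi * Complex.I * α) ^ k‖ = 1 := by
    intro k
    have : (2 * Real.pi * Complex.I * α : ℂ) = ((2 * Real.pi * α : ℝ) : ℂ) * Complex.I := by
      push_cast; ring
    rw [norm_pow, this, Complex.norm_exp_ofReal_mul_I, one_pow]
  have h1 : ‖Complex.exp (2 * Real.pi * Complex.I * α) - 1‖ = 2 * |Real.sin (Real.pi * α)| := by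
    have := Complex.norm_exp_I_mul_ofReal_sub_one (2 * Real.pi * α)
    have e : (2 * Real.pi * Complex.I * α : ℂ) = Complex.I * ((2 * Real.pi * α : ℝ) : ℂ) := by
      push_cast; ring
    rw [e, this, norm_mul, Real.norm_eq_abs, Real.norm_eq_abs]
    congr 3
    · norm_num
    · ring
  have h2 : auxD N α * ‖Complex.exp (2 * Real.pi * Complex.I * α) - 1‖ ≤ 2 := by
    unfold auxD
    have : ∀ k : ℕ, Complex.exp (2 * Real.pi * Complex.I * k * α)
        = Complex.exp (2 * Real.pi * Complex.I * α) ^ k := by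
      intro k
      rw [← Complex.exp_nat_mul]; congr 1; ring
    simp_rw [this]
    rw [← norm_mul, geom_sum_mul]
    refine (norm_sub_le _ _).trans ?_
    rw [hn, norm_one]; norm_num
  rw [h1] at h2
  linarith

lemma aux_pt (N : ℕ) (α : ℝ) (h0 : 0 ≤ α) (h1 : α ≤ 1) :
    auxD N α ≤ 2 * (N / (1 + N * α)) + 2 * (N / (1 + N * (1 - α))) := by
  have hD := auxD_le N α
  have hS := auxD_sin N α
  have hD0 : 0 ≤ auxD N α := norm_nonneg _
  have hN : (0:ℝ) ≤ N := Nat.cast_nonneg _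
  have key : ∀ x : ℝ, 0 ≤ x → x ≤ 1 / 2 → |Real.sin (Real.pi * x)| = |Real.sin (Real.pi * α)| →
      auxD N α ≤ 2 * (N / (1 + N * x)) := by
    intro x hx hx' he
    have hs : 2 * x ≤ Real.sin (Real.pi * x) := by
      have := Real.mul_le_sin (x := Real.pi * x) (by positivity)
        (by nlinarith [Real.pi_pos])
      have e : 2 / Real.pi * (Real.pi * x) = 2 * x := by field_simp
      linarith
    have hs2 : 2 * x ≤ |Real.sin (Real.pi * α)| := he ▸ hs.trans (le_abs_self _)
    have h3 : auxD N α * (2 * x) ≤ 1 := (mul_le_mul_of_nonneg_left hs2 hD0).trans hS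
    rw [← mul_div_assoc, le_div_iff₀ (by positivity)]
    nlinarith
  rcases le_total α (1 / 2) with h | h
  · have := key α h0 h rfl
    have : (0:ℝ) ≤ N / (1 + N * (1 - α)) := by
      have : 0 ≤ 1 - α := by linarith
      positivity
    linarith
  · have := key (1 - α) (by linarith) (by linarith) (by
      rw [mul_sub, mul_one, Real.sin_pi_sub])
    have : (0:ℝ) ≤ N / (1 + N * α) := by positivity
    linarith

lemma aux_int (N : ℕ) : (∫ α in (0:ℝ)..1, (N:ℝ) / (1 + N * α)) = Real.log (1 + N) := by
  have hd : ∀ x ∈ Set.uIcc (0:ℝ) 1,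
      HasDerivAt (fun x : ℝ => Real.log (1 + N * x)) ((N:ℝ) / (1 + N * x)) x := by
    intro x hx
    rw [Set.uIcc_of_le zero_le_one] at hx
    have hx0 := hx.1
    have : (1 + N * x : ℝ) ≠ 0 := by positivity
    have h2 : HasDerivAt (fun x : ℝ => 1 + (N:ℝ) * x) N x := by
      simpa using ((hasDerivAt_id x).const_mul (N:ℝ)).const_add 1
    exact h2.log this
  rw [intervalIntegral.integral_eq_sub_of_hasDerivAt hd]
  · simp
  · apply ContinuousOn.intervalIntegrable
    intro x hx
    rw [Set.uIcc_of_le zero_le_one] at hx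
    have hx0 := hx.1
    have : (1 + N * x : ℝ) ≠ 0 := by positivity
    apply ContinuousAt.continuousWithinAt
    fun_prop (disch := assumption)

lemma aux_ii (N : ℕ) : IntervalIntegrable (fun α : ℝ => (N:ℝ) / (1 + N * α))
    MeasureTheory.volume 0 1 := by
  apply ContinuousOn.intervalIntegrable
  intro x hx
  rw [Set.uIcc_of_le zero_le_one] at hx
  have hx0 := hx.1
  have : (1 + N * x : ℝ) ≠ 0 := by positivity
  apply ContinuousAt.continuousWithinAt
  fun_prop (disch := assumption)

lemma auxD_cont (N : ℕ) : Continuous (auxD N) := by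
  unfold auxD; fun_prop

lemma aux_L1 (N : ℕ) : (∫ α in (0:ℝ)..1, auxD N α) ≤ 4 * Real.log (1 + N) := by
  have hi := aux_ii N
  have hi2 : IntervalIntegrable (fun α : ℝ => (N:ℝ) / (1 + N * (1 - α)))
      MeasureTheory.volume 0 1 := by
    simpa using (hi.comp_sub_left 1).symm
  have he : (∫ α in (0:ℝ)..1, (N:ℝ) / (1 + N * (1 - α))) = Real.log (1 + N) := by
    rw [← aux_int N]
    simpa using intervalIntegral.integral_comp_sub_left (a := 0) (b := 1)
      (fun α : ℝ => (N:ℝ) / (1 + N * α)) 1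
  calc _ ≤ ∫ α in (0:ℝ)..1, (2 * ((N:ℝ) / (1 + N * α)) + 2 * (N / (1 + N * (1 - α)))) := by
        apply intervalIntegral.integral_mono_on zero_le_one
        · exact (auxD_cont N).intervalIntegrable _ _
        · exact (hi.const_mul 2).add (hi2.const_mul 2)
        · intro α h
          exact aux_pt N α h.1 h.2
    _ = _ := by
        rw [intervalIntegral.integral_add (hi.const_mul 2) (hi2.const_mul 2),
          intervalIntegral.integral_const_mul, intervalIntegral.integral_const_mul, he, aux_int]
        ring

lemma aux_per (N : ℕ) : Function.Periodic (auxD N) 1 := by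
  intro α
  unfold auxD
  congr 1
  refine Finset.sum_congr rfl fun k _ => ?_
  have : (2 * Real.pi * Complex.I * k * ((α + 1 : ℝ) : ℂ))
      = 2 * Real.pi * Complex.I * k * α + k * (2 * Real.pi * Complex.I) := by
    push_cast; ring
  rw [this, Complex.exp_add, Complex.exp_nat_mul_two_pi_mul_I, mul_one]

lemma aux_shift (N : ℕ) (β : ℝ) :
    (∫ α in (0:ℝ)..1, auxD N (α + β)) ≤ 4 * Real.log (1 + N) := by
  rw [intervalIntegral.integral_comp_add_right (auxD N) β]
  have := (aux_per N).intervalIntegral_add_eq β 0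
  rw [zero_add, add_comm 1 β, this, zero_add]
  exact aux_L1 N

lemma aux_main (N : ℕ) (M : ℝ) (hM : 1 ≤ M) (h : ℕ → ℝ → ℂ) (A : Finset ℕ) :
    (∀ j ∈ A, (∃ d : ℕ, IsTrigPolyDeg (h j) d) ∧
        (∑' b : ℤ, norm (fourierCoeff01 (h j) b)) ≤ M) →
    ∀ β : ℝ, (∫ α in (0:ℝ)..1, norm (∑ k ∈ Finset.range N,
      (∏ j ∈ A, h j ((k : ℝ) / 2 ^ (j + 1))) *
        Complex.exp (2 * Real.pi * Complex.I * k * (α + β))))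
        ≤ M ^ A.card * (4 * Real.log (1 + N)) := by
  induction A using Finset.induction_on with
  | empty =>
    intro _ β
    have := aux_shift N β
    unfold auxD at this
    simpa using this
  | insert i A hi ih =>
    intro hA β
    have ih' := ih fun j hj => hA j (Finset.mem_insert_of_mem hj)
    obtain ⟨⟨d, a, ha, hh⟩, hs⟩ := hA i (Finset.mem_insert_self _ _)
    rw [aux_sum (h i) d a ha hh] at hs
    have hl : 0 ≤ Real.log (1 + N) := Real.log_nonneg (by simp)
    have := aux_step N (fun k => ∏ j ∈ A, h j ((k : ℝ) / 2 ^ (j + 1)))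
      (M ^ A.card * (4 * Real.log (1 + N))) (by positivity) ih' _ a M hs (2 ^ (i + 1)) β
    simp_rw [← hh] at this
    simp_rw [Finset.prod_insert hi]
    rw [Finset.card_insert_of_notMem hi, pow_succ' M, mul_assoc M]
    exact this


/-- The `L¹`-norm bound `‖S_f‖₁ ≤ C M^{|A|} log N` for the exponential sum of a
digit weight `f(k) = ∏_{j ∈ A} h_j(k / 2^{j+1})` built from 1-periodic trigonometric
polynomials `h_j` with `∑_b |ĥ_j(b)| ≤ M`. -/
theorem digitWeight_expSum_L1_bound :
    ∃ C : ℝ, ∀ n : ℕ, 2 ≤ n → ∀ N : ℕ, N = 2 ^ n →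
      ∀ A : Finset ℕ, A ⊆ Finset.Icc 1 (n - 1) →
      ∀ M : ℝ, 1 ≤ M →
      ∀ h : ℕ → ℝ → ℂ,
      (∀ j ∈ A, Function.Periodic (h j) 1 ∧ (∃ d : ℕ, IsTrigPolyDeg (h j) d) ∧
        (∑' b : ℤ, norm (fourierCoeff01 (h j) b)) ≤ M) →
      (∫ α in (0:ℝ)..1, norm (∑ k ∈ Finset.range N,
          (∏ j ∈ A, h j ((k : ℝ) / 2 ^ (j + 1))) *
            Complex.exp (2 * Real.pi * Complex.I * k * α)))
        ≤ C * M ^ A.card * Real.log N := by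
  refine ⟨8, ?_⟩
  intro n hn N hN A _ M hM h hh
  have h1 := aux_main N M hM h A (fun j hj => (hh j hj).2) 0
  simp only [Complex.ofReal_zero, add_zero] at h1
  refine h1.trans ?_
  have hN2 : (2:ℝ) ≤ N := by
    have : 2 ^ 1 ≤ 2 ^ n := Nat.pow_le_pow_right (by norm_num) (by omega)
    rw [hN]; exact_mod_cast this
  have hl : Real.log (1 + N) ≤ 2 * Real.log N := by
    have : (2:ℝ) * Real.log N = Real.log ((N:ℝ) ^ 2) := by rw [Real.log_pow]; norm_num
    rw [this]
    exact Real.log_le_log (by positivity) (by nlinarith)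
  have hp : 0 ≤ M ^ A.card := by positivity
  nlinarith
end

section
/- There exists an integer n₀ such that the following holds for all n ≥ n₀. Let r, r₁, D, ΔJ be positive integers and let B, Q ≥ 2 be real numbers with: r ≤ n/(40 log₂ n), D > 10 log₂ n, ΔJ > 10 log₂(nB), r₁ D < ΔJ/10, and 2^D ≤ Q ≤ B. Let 1 ≤ j₁ < j₂ < ⋯ < j_{r₁} be integers with ΔJ − j_{r₁} > n/(10r), and let β₁,…,β_{r₁} be integers with |β_s| ≤ n³ for all s, such that θ := ∑_{s=1}^{r₁} β_s 2^{−j_s} is not an integer. Then the number of odd integers q with Q < q ≤ 2Q and ‖qθ‖ < n² Q 2^{−ΔJ} is at most 2^{−D/2} Q. -/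
open scoped Classical

/-- The distance `‖x‖` from a real number `x` to the nearest integer. -/
noncomputable def distNearestInt (x : ℝ) : ℝ := |x - round x|

lemma int_small {z : ℤ} (h : |(z : ℝ)| < 1) : z = 0 := by
  have : |z| < 1 := by exact_mod_cast h
  exact Int.abs_lt_one_iff.mp this

set_option maxHeartbeats 2000000 in
lemma gap_core (n Q H E θ : ℝ) (J K : ℕ) (A C : ℤ) (q q' : ℕ) (m m' : ℤ)
    (hn : 16 ≤ n) (hQ : 2 ≤ Q) (hM : ((2 : ℝ) ^ J) ^ 10 ≤ H) (hH : (n * Q) ^ 10 ≤ H)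
    (hN : (2 : ℝ) ^ K * n ^ 4 ≤ H) (hE : n ^ 10 ≤ E)
    (ht : |θ - A / 2 ^ J| ≤ 2 * n ^ 3 / (2 ^ J * E))
    (hC : θ * 2 ^ K = C) (hθ : ¬ ∃ m : ℤ, θ = (m : ℝ))
    (hodd : Odd q) (hq1 : Q < q) (hq2 : (q : ℝ) ≤ 2 * Q) (hq3 : (q' : ℝ) ≤ 2 * Q)
    (hlt : q < q') (hd : ((q' : ℝ) - q) ^ 2 < 4 * E)
    (h1 : |q * θ - m| < n ^ 2 * Q / H) (h2 : |q' * θ - m'| < n ^ 2 * Q / H) : False := by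
  set M : ℝ := 2 ^ J with hMdef
  have hM1 : 1 ≤ M := one_le_pow₀ (by norm_num)
  have hN1 : (1 : ℝ) ≤ 2 ^ K := one_le_pow₀ (by norm_num)
  have hnQ : 32 ≤ n * Q := by nlinarith
  have hH0 : 0 < H := by
    have : 0 < (n * Q) ^ 10 := by positivity
    linarith
  have hE0 : 0 < E := by
    have : 0 < n ^ 10 := by positivity
    linarith
  set δ := n ^ 2 * Q / H with hδ
  have hδ0 : 0 < δ := by positivity
  obtain ⟨d, hd1, hdef⟩ : ∃ d : ℕ, 1 ≤ d ∧ (d : ℝ) = (q' : ℝ) - q := by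
    refine ⟨q' - q, by omega, ?_⟩
    rw [Nat.cast_sub hlt.le]
  rw [← hdef] at hd
  have hd1' : (1 : ℝ) ≤ d := by exact_mod_cast hd1
  have hdQ : (d : ℝ) ≤ Q := by linarith
  -- bounds on δ
  have hδM : δ * M * 8 ≤ 1 := by
    set X := max M (n * Q) with hX
    have hXH : X ^ 10 ≤ H := by
      rcases max_choice M (n * Q) with h | h <;> rw [hX, h] <;> assumption
    have hX1 : M ≤ X := le_max_left _ _
    have hX2 : n * Q ≤ X := le_max_right _ _
    have hX32 : 32 ≤ X := by linarith
    have a1 : n ^ 2 * Q ≤ X ^ 2 := by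
      calc n ^ 2 * Q ≤ (n * Q) ^ 2 := by
            rw [mul_pow]; gcongr; nlinarith
        _ ≤ X ^ 2 := by gcongr
    have a2 : n ^ 2 * Q * M * 8 ≤ X ^ 2 * X * X ^ 7 := by
      have : 8 ≤ X ^ 7 := by
        calc (8 : ℝ) ≤ 32 ^ 7 := by norm_num
          _ ≤ X ^ 7 := by gcongr
      gcongr
    have : δ * M * 8 = n ^ 2 * Q * M * 8 / H := by rw [hδ]; ring
    rw [this, div_le_one hH0]
    calc _ ≤ _ := a2
      _ = X ^ 10 := by ring
      _ ≤ H := hXH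
  have hδQ : δ * (8 * Q ^ 2) ≤ 1 := by
    have : δ * (8 * Q ^ 2) = n ^ 2 * Q * (8 * Q ^ 2) / H := by rw [hδ]; ring
    rw [this, div_le_one hH0]
    refine le_trans ?_ hH
    have a1 : n ^ 2 * Q * (8 * Q ^ 2) ≤ (n * Q) ^ 3 := by
      have : n ^ 2 * Q * (8 * Q ^ 2) = 8 * (n ^ 2 * Q ^ 3) := by ring
      have h' : (n * Q) ^ 3 = n * (n ^ 2 * Q ^ 3) := by ring
      rw [this, h']; gcongr; linarith
    exact a1.trans (pow_le_pow_right₀ (by linarith) (by norm_num))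
  have hdn : 4 * d * n ^ 3 ≤ E := by
    have h4 : 64 ≤ n ^ 4 := by
      calc (64 : ℝ) ≤ 16 ^ 4 := by norm_num
          _ ≤ n ^ 4 := by gcongr
    have : (4 * d * n ^ 3) ^ 2 ≤ E ^ 2 := by
      calc (4 * d * n ^ 3) ^ 2 = 16 * n ^ 6 * (d : ℝ) ^ 2 := by ring
        _ ≤ 16 * n ^ 6 * (4 * E) := by gcongr
        _ = 64 * n ^ 6 * E := by ring
        _ ≤ n ^ 4 * n ^ 6 * E := by gcongr
        _ = n ^ 10 * E := by ring
        _ ≤ E * E := by gcongr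
        _ = E ^ 2 := by ring
    exact le_of_sq_le_sq this hE0.le
  set t := θ - A / M with htdef
  have hθt : θ = A / M + t := by rw [htdef]; ring
  have hM0 : 0 < M := by linarith
  have hdt : |d * t| * M ≤ 1 / 2 := by
    rw [abs_mul, abs_of_nonneg (by positivity : (0 : ℝ) ≤ d)]
    calc d * |t| * M ≤ d * (2 * n ^ 3 / (M * E)) * M := by gcongr
      _ = (4 * d * n ^ 3) / E / 2 := by field_simp; ring
      _ ≤ 1 / 2 := by
        gcongr
        rw [div_le_one hE0]; exact hdn
  -- step 1
  have hdm : |d * θ - ((m' - m : ℤ) : ℝ)| < 2 * δ := by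
    have : d * θ - ((m' - m : ℤ) : ℝ) = (q' * θ - m') - (q * θ - m) := by
      push_cast; rw [hdef]; ring
    rw [this]
    have := abs_sub (q' * θ - m') (q * θ - m)
    linarith
  set u : ℤ := m' - m with hu
  have hz : (d : ℤ) * A - u * 2 ^ J = 0 := by
    apply int_small
    have e : (((d : ℤ) * A - u * 2 ^ J : ℤ) : ℝ) = (d * θ - u) * M - d * t * M := by
      push_cast; rw [hθt, ← hMdef]; field_simp; ring
    rw [e]
    have h3 := abs_sub ((d * θ - u) * M) (d * t * M)
    rw [abs_mul _ M, abs_mul _ M, abs_of_pos hM0] at h3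
    have h4 : |d * θ - u| * M < 2 * δ * M := by gcongr
    linarith
  have hz' : (d : ℝ) * A = u * M := by
    have : (d : ℤ) * A = u * 2 ^ J := by linarith
    rw [hMdef]; exact_mod_cast this
  have hdt2 : |d * t| < 2 * δ := by
    have : d * t = d * θ - u := by
      rw [hθt]
      have : (u : ℝ) = d * A / M := by rw [hz']; field_simp
      rw [this]; ring
    rw [this]; exact hdm
  have ht2 : |t| < 2 * δ := by
    rw [abs_mul, abs_of_nonneg (by positivity : (0 : ℝ) ≤ d)] at hdt2
    nlinarith [abs_nonneg t]
  have hqt : |q * t| ≤ 4 * Q * δ := by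
    rw [abs_mul, abs_of_nonneg (by positivity : (0 : ℝ) ≤ q)]
    calc (q : ℝ) * |t| ≤ 2 * Q * (2 * δ) := by gcongr
      _ = _ := by ring
  -- step 3
  have hw : (q : ℤ) * u - d * m = 0 := by
    apply int_small
    have e : (((q : ℤ) * u - d * m : ℤ) : ℝ) = d * ((q * θ - m) - q * t) := by
      push_cast
      have : (u : ℝ) = d * A / M := by rw [hz']; field_simp
      rw [this, hθt]; ring
    rw [e, abs_mul, abs_of_nonneg (by positivity : (0 : ℝ) ≤ d)]
    have h3 := abs_sub (q * θ - m) (q * t)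
    calc (d : ℝ) * |q * θ - m - q * t| ≤ Q * |q * θ - m - q * t| := by gcongr
      _ < Q * (δ + 4 * Q * δ) := by
        apply mul_lt_mul_of_pos_left _ (by linarith); linarith
      _ = δ * (Q + 4 * Q ^ 2) := by ring
      _ ≤ δ * (8 * Q ^ 2) := by
        apply mul_le_mul_of_nonneg_left _ hδ0.le
        nlinarith only [hQ]
      _ ≤ 1 := hδQ
  have hqA : (q : ℤ) * A = m * 2 ^ J := by
    have hd0 : (d : ℤ) ≠ 0 := by exact_mod_cast (by omega : d ≠ 0)
    apply mul_left_cancel₀ hd0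
    linear_combination (q : ℤ) * hz + 2 ^ J * hw
  obtain ⟨h, hh⟩ : (2 : ℤ) ^ J ∣ A := by
    have hc : IsCoprime ((2 : ℤ) ^ J) (q : ℤ) := by
      apply IsCoprime.pow_left
      have := (Nat.coprime_two_left).mpr hodd
      exact_mod_cast Nat.isCoprime_iff_coprime.mpr this
    exact hc.dvd_of_dvd_mul_left (Dvd.intro_left m hqA.symm)
  have hhm : (q : ℤ) * h = m := by
    have h2 : (2 : ℤ) ^ J ≠ 0 := by positivity
    apply mul_right_cancel₀ h2
    rw [← hqA, hh]; ring
  have hθh : θ = h + t := by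
    rw [hθt, hh]; push_cast; rw [← hMdef]; field_simp
  have hqt2 : |q * t| < δ := by
    have : q * t = q * θ - m := by
      rw [hθh, ← hhm]; push_cast; ring
    rw [this]; exact h1
  have ht3 : |t| * H < n ^ 2 := by
    rw [abs_mul, abs_of_nonneg (by positivity : (0 : ℝ) ≤ q), hδ, lt_div_iff₀ hH0] at hqt2
    have : Q * (|t| * H) ≤ q * |t| * H := by
      rw [← mul_assoc]; gcongr
    nlinarith
  have : C - h * 2 ^ K = 0 := by
    apply int_small
    have e : ((C - h * 2 ^ K : ℤ) : ℝ) = t * 2 ^ K := by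
      push_cast; rw [← hC, hθh]; ring
    rw [e, abs_mul, abs_of_pos (by positivity : (0 : ℝ) < 2 ^ K)]
    have hn2 : 0 < n ^ 2 := by positivity
    have : |t| * 2 ^ K * n ^ 4 ≤ |t| * H := by rw [mul_assoc]; gcongr
    have h5 : n ^ 2 ≤ n ^ 4 := pow_le_pow_right₀ (by linarith) (by norm_num)
    by_contra hcon
    push Not at hcon
    nlinarith
  apply hθ
  refine ⟨h, ?_⟩
  have h6 : (C : ℝ) = h * 2 ^ K := by exact_mod_cast (by linarith : C = h * 2 ^ K)
  rw [h6] at hC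
  exact mul_right_cancel₀ (by positivity) hC

lemma geom_bound (T : Finset ℕ) (K : ℕ) (hT : ∀ t ∈ T, K ≤ t) :
    ∑ t ∈ T, (1 : ℝ) / 2 ^ t ≤ 2 / 2 ^ K := by
  have h1 : ∑ t ∈ T, (1 : ℝ) / 2 ^ t = (∑ t ∈ T.image (fun t => t - K), (1 / 2 : ℝ) ^ t) / 2 ^ K := by
    rw [Finset.sum_image, Finset.sum_div]
    · apply Finset.sum_congr rfl
      intro t ht
      obtain ⟨s, rfl⟩ := Nat.exists_eq_add_of_le (hT t ht)
      simp only [Nat.add_sub_cancel_left, one_div, inv_pow, pow_add]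
      field_simp
    · intro a ha b hb hab
      have := hT a ha
      have := hT b hb
      simp only at hab
      omega
  rw [h1]
  gcongr
  have := Summable.sum_le_tsum (f := fun t : ℕ => (1 / 2 : ℝ) ^ t) (T.image (fun t => t - K))
    (fun i _ => by positivity) summable_geometric_two
  rwa [tsum_geometric_two] at this

lemma pigeon (r D : ℕ) (hD : 0 < D) (j : Fin r → ℕ) :
    ∃ J, J ≤ r * D ∧ ∀ s, j s ≤ J ∨ J + D ≤ j s := by
  by_contra hcon
  push Not at hcon
  have h : ∀ i : Fin (r + 1), ∃ s, i.1 * D < j s ∧ j s < i.1 * D + D := by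
    intro i
    exact hcon (i.1 * D) (Nat.mul_le_mul_right _ (by omega))
  choose f hf using h
  have : Function.Injective f := by
    intro a b hab
    have h1 := hf a
    have h2 := hf b
    rw [hab] at h1
    have e1 : j (f b) / D = a.1 := by
      rw [Nat.div_eq_iff hD]; constructor <;> omega
    have e2 : j (f b) / D = b.1 := by
      rw [Nat.div_eq_iff hD]; constructor <;> omega
    ext; omega
  have := Fintype.card_le_of_injective f this
  simp at this

lemma sep_card (S : Finset ℕ) (Q R : ℝ) (hR : 0 < R) (hQ : 0 ≤ Q) (hRQ : 2 * R ≤ Q)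
    (h1 : ∀ q ∈ S, Q < (q : ℝ) ∧ (q : ℝ) ≤ 2 * Q)
    (h2 : ∀ q ∈ S, ∀ q' ∈ S, q < q' → 2 * R ≤ (q' : ℝ) - q) :
    (S.card : ℝ) ≤ Q / R := by
  have hc : S.card ≤ (Finset.range (⌊Q / (2 * R)⌋₊ + 1)).card := by
    apply Finset.card_le_card_of_injOn (fun q : ℕ => ⌊((q : ℝ) - Q) / (2 * R)⌋₊)
    · intro q hq
      have := h1 q hq
      simp only [Finset.coe_range, Set.mem_Iio]
      apply Nat.lt_succ_of_le
      apply Nat.floor_le_floor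
      gcongr
      linarith
    · have key : ∀ q ∈ S, ∀ q' ∈ S, q < q' →
          ⌊((q : ℝ) - Q) / (2 * R)⌋₊ < ⌊((q' : ℝ) - Q) / (2 * R)⌋₊ := by
        intro q hq q' hq' hlt
        have a := h2 q hq q' hq' hlt
        have b := h1 q hq
        apply Nat.lt_of_succ_le
        have hnn : 0 ≤ ((q : ℝ) - Q) / (2 * R) := div_nonneg (by linarith) (by linarith)
        rw [Nat.succ_eq_add_one, ← Nat.floor_add_one hnn]
        apply Nat.floor_le_floor
        rw [div_add_one (by positivity)]
        gcongr
        linarith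
      intro q hq q' hq' heq
      simp only at heq
      rcases lt_trichotomy q q' with h | h | h
      · have := key q hq q' hq' h; omega
      · exact h
      · have := key q' hq' q hq h; omega
  rw [Finset.card_range] at hc
  have hc' : (S.card : ℝ) ≤ ⌊Q / (2 * R)⌋₊ + 1 := by exact_mod_cast hc
  have hf : (⌊Q / (2 * R)⌋₊ : ℝ) ≤ Q / (2 * R) := Nat.floor_le (by positivity)
  have h3 : 1 ≤ Q / (2 * R) := by rw [one_le_div (by positivity)]; exact hRQ
  have h4 : Q / R = Q / (2 * R) + Q / (2 * R) := by field_simp; ring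
  linarith

/-- Counting odd `q ∈ (Q, 2Q]` with `‖qθ‖ < n² Q 2^{-ΔJ}` for
`θ = ∑_s β_s 2^{-j_s}` not an integer: there are at most `2^{-D/2} Q` of them. -/
theorem count_odd_q_near_int :
    ∃ n₀ : ℕ, ∀ n : ℕ, n₀ ≤ n →
      ∀ r r₁ D ΔJ : ℕ, 0 < r → ∀ hr₁ : 0 < r₁, 0 < D → 0 < ΔJ →
      ∀ B Q : ℝ, 2 ≤ B → 2 ≤ Q →
      (r : ℝ) ≤ (n : ℝ) / (40 * Real.logb 2 n) →
      (D : ℝ) > 10 * Real.logb 2 n →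
      (ΔJ : ℝ) > 10 * Real.logb 2 ((n : ℝ) * B) →
      ((r₁ * D : ℕ) : ℝ) < (ΔJ : ℝ) / 10 →
      (2 : ℝ) ^ D ≤ Q → Q ≤ B →
      ∀ j : Fin r₁ → ℕ, 1 ≤ j ⟨0, hr₁⟩ → StrictMono j →
      ((ΔJ : ℝ) - (j ⟨r₁ - 1, by omega⟩ : ℝ)) > (n : ℝ) / (10 * r) →
      ∀ β : Fin r₁ → ℤ, (∀ s, |β s| ≤ (n : ℤ) ^ 3) →
      ∀ θ : ℝ, θ = ∑ s : Fin r₁, (β s : ℝ) / 2 ^ (j s) →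
      (¬ ∃ m : ℤ, θ = (m : ℝ)) →
      (((Finset.range (⌊2 * Q⌋₊ + 1)).filter (fun q : ℕ => Odd q ∧ Q < (q : ℝ) ∧
          (q : ℝ) ≤ 2 * Q ∧
          distNearestInt ((q : ℝ) * θ) < (n : ℝ) ^ 2 * Q / 2 ^ ΔJ)).card : ℝ)
        ≤ (2 : ℝ) ^ (-(D : ℝ) / 2) * Q := by
  refine ⟨16, ?_⟩
  intro n hn r r₁ D ΔJ hr hr₁ hD hΔ B Q hB hQ hrn hDn hΔB hrD hDQ hQB j hj1 hj hjl β hβ θ hθ hθi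
  have hn' : (16 : ℝ) ≤ n := by exact_mod_cast hn
  have hn0 : (0 : ℝ) < n := by linarith
  have hL : 0 < Real.logb 2 n := Real.logb_pos (by norm_num) (by linarith)
  have hE : (n : ℝ) ^ 10 ≤ 2 ^ D := by
    rw [← Real.rpow_natCast 2 D, ← Real.logb_le_iff_le_rpow (by norm_num) (by positivity),
      Real.logb_pow]
    push_cast; linarith
  have hH : ((n : ℝ) * Q) ^ 10 ≤ 2 ^ ΔJ := by
    have : ((n : ℝ) * B) ^ 10 ≤ 2 ^ ΔJ := by
      rw [← Real.rpow_natCast 2 ΔJ, ← Real.logb_le_iff_le_rpow (by norm_num) (by positivity),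
        Real.logb_pow]
      push_cast; linarith
    refine le_trans ?_ this
    gcongr
  set K := j ⟨r₁ - 1, by omega⟩ with hK
  have hN : (2 : ℝ) ^ K * (n : ℝ) ^ 4 ≤ 2 ^ ΔJ := by
    have hr0 : (0 : ℝ) < r := by exact_mod_cast hr
    have h4 : 4 * Real.logb 2 n ≤ (n : ℝ) / (10 * r) := by
      rw [le_div_iff₀ (by positivity)] at hrn ⊢
      linarith
    rw [← Real.rpow_natCast 2 ΔJ, ← Real.logb_le_iff_le_rpow (by norm_num) (by positivity),
      Real.logb_mul (by positivity) (by positivity), Real.logb_pow, Real.logb_pow,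
      Real.logb_self_eq_one (by norm_num)]
    push_cast; linarith
  have hjK : ∀ s, j s ≤ K := by
    intro s
    apply hj.monotone
    rw [Fin.le_def]
    have := s.2
    simp only
    omega
  obtain ⟨J, hJ, hJs⟩ := pigeon r₁ D hD j
  have hM : ((2 : ℝ) ^ J) ^ 10 ≤ 2 ^ ΔJ := by
    rw [← pow_mul]
    apply pow_le_pow_right₀ (by norm_num)
    have h1 : ((r₁ * D : ℕ) : ℝ) * 10 < ΔJ := by linarith
    have h2 : (r₁ * D) * 10 < ΔJ := by exact_mod_cast h1
    omega
  have hint : ∀ (P : Fin r₁ → Prop) [DecidablePred P] (L : ℕ), (∀ s, P s → j s ≤ L) →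
      ∃ C : ℤ, (∑ s with P s, (β s : ℝ) / 2 ^ (j s)) * 2 ^ L = C := by
    intro P _ L hP
    refine ⟨∑ s with P s, β s * 2 ^ (L - j s), ?_⟩
    push_cast
    rw [Finset.sum_mul]
    apply Finset.sum_congr rfl
    intro s hs
    have hs' := hP s (by simpa using hs)
    obtain ⟨k, hk⟩ := Nat.exists_eq_add_of_le hs'
    rw [hk, Nat.add_sub_cancel_left, pow_add]
    field_simp
  obtain ⟨C, hC⟩ := hint (fun _ => True) K (fun s _ => hjK s)
  obtain ⟨A, hA⟩ := hint (fun s => j s ≤ J) J (fun s h => h)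
  simp only [Finset.filter_true, ← hθ] at hC
  have ht : |θ - A / 2 ^ J| ≤ 2 * (n : ℝ) ^ 3 / (2 ^ J * 2 ^ D) := by
    have e : θ - A / 2 ^ J = ∑ s with ¬ (j s ≤ J), (β s : ℝ) / 2 ^ (j s) := by
      rw [← hA, mul_div_assoc, div_self (by positivity), mul_one, hθ,
        ← Finset.sum_filter_add_sum_filter_not Finset.univ (fun s => j s ≤ J)]
      ring
    rw [e]
    calc |∑ s with ¬ (j s ≤ J), (β s : ℝ) / 2 ^ (j s)|
        ≤ ∑ s with ¬ (j s ≤ J), |(β s : ℝ) / 2 ^ (j s)| := Finset.abs_sum_le_sum_abs _ _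
      _ ≤ ∑ s with ¬ (j s ≤ J), (n : ℝ) ^ 3 * (1 / 2 ^ (j s)) := by
        apply Finset.sum_le_sum
        intro s _
        rw [abs_div, abs_of_pos (by positivity : (0 : ℝ) < 2 ^ (j s)), mul_one_div]
        gcongr
        exact_mod_cast hβ s
      _ = (n : ℝ) ^ 3 * ∑ t ∈ (Finset.univ.filter (fun s => ¬ (j s ≤ J))).image j,
            (1 : ℝ) / 2 ^ t := by
        rw [Finset.sum_image (fun a _ b _ h => hj.injective h), Finset.mul_sum]
      _ ≤ (n : ℝ) ^ 3 * (2 / 2 ^ (J + D)) := by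
        gcongr
        apply geom_bound
        intro t ht
        simp only [Finset.mem_image, Finset.mem_filter, Finset.mem_univ, true_and] at ht
        obtain ⟨s, hs, rfl⟩ := ht
        exact (hJs s).resolve_left hs
      _ = _ := by rw [pow_add]; ring
  have hR0 : (0 : ℝ) < (2 : ℝ) ^ ((D : ℝ) / 2) := by positivity
  have hR2 : ((2 : ℝ) ^ ((D : ℝ) / 2)) ^ 2 = 2 ^ D := by
    rw [← Real.rpow_natCast, ← Real.rpow_mul (by norm_num), ← Real.rpow_natCast 2 D]
    congr 1; push_cast; ring
  have hneg : (2 : ℝ) ^ (-(D : ℝ) / 2) * Q = Q / (2 : ℝ) ^ ((D : ℝ) / 2) := by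
    rw [neg_div, Real.rpow_neg (by norm_num)]; field_simp
  rw [hneg]
  set R := (2 : ℝ) ^ ((D : ℝ) / 2) with hR
  have hR4 : 2 ≤ R := by
    have h16 : (4 : ℝ) ≤ (n : ℝ) ^ 10 := by
      calc (4 : ℝ) ≤ 16 ^ 10 := by norm_num
        _ ≤ (n : ℝ) ^ 10 := by gcongr
    nlinarith
  apply sep_card _ Q R hR0 (by linarith) (by nlinarith)
  · intro q hq
    rw [Finset.mem_filter] at hq
    exact ⟨hq.2.2.1, hq.2.2.2.1⟩
  · intro q hq q' hq' hlt
    rw [Finset.mem_filter] at hq hq'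
    obtain ⟨-, ho, hq1, hq2, hq3⟩ := hq
    obtain ⟨-, -, hq1', hq2', hq3'⟩ := hq'
    by_contra hcon
    push Not at hcon
    have hlt' : (q : ℝ) < q' := by exact_mod_cast hlt
    refine gap_core n Q (2 ^ ΔJ) (2 ^ D) θ J K A C q q' (round ((q : ℝ) * θ))
      (round ((q' : ℝ) * θ)) hn' hQ hM hH hN hE ht hC hθi ho hq1 hq2 hq2' hlt ?_ hq3 hq3'
    rw [← hR2]
    nlinarith
end

section
/- There is an absolute constant C such that for every integer q ≥ 2, every primitive Dirichlet character χ modulo q, every positive integer q₀ with gcd(q₀, q) = 1, all integers a and c, every real number ξ, and every integer M ≥ 1, one has |∑_{0 ≤ v < M, v ≡ a (mod q₀)} e(ξ v) χ(v + c)| ≤ C (1 + M/(q₀ q)) √q · log q. -/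
/-- `e(x) = exp(2 π i x)`. -/
noncomputable def ex (x : ℝ) : ℂ := Complex.exp (2 * Real.pi * Complex.I * x)

lemma ex_add (x y : ℝ) : ex (x + y) = ex x * ex y := by
  unfold ex
  rw [← Complex.exp_add]
  congr 1
  push_cast
  ring

lemma norm_ex (x : ℝ) : ‖ex x‖ = 1 := by
  unfold ex
  rw [show (2 * Real.pi * Complex.I * x : ℂ) = ((2 * Real.pi * x : ℝ) : ℂ) * Complex.I by
    push_cast; ring]
  exact Complex.norm_exp_ofReal_mul_I _

lemma ex_mul_nat (x : ℝ) (n : ℕ) : ex (x * n) = ex x ^ n := by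
  unfold ex
  rw [← Complex.exp_nat_mul]
  congr 1
  push_cast
  ring

lemma geom_norm_le (z : ℂ) (hz : ‖z‖ = 1) (K : ℕ) : ‖∑ w ∈ Finset.range K, z ^ w‖ ≤ K := by
  refine (norm_sum_le _ _).trans ?_
  simp [hz]

lemma norm_ex_sub_one (x : ℝ) : ‖ex x - 1‖ = 2 * |Real.sin (Real.pi * x)| := by
  have h : ex x - 1 = ex (x / 2) * (2 * Complex.I * (Real.sin (Real.pi * x) : ℂ)) := by
    unfold ex
    rw [Complex.ofReal_sin, Complex.sin]
    have h1 : (2 * Real.pi * Complex.I * x : ℂ)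
      = (Real.pi * x) * Complex.I + (Real.pi * x) * Complex.I := by ring
    have h2 : (2 * Real.pi * Complex.I * ((x / 2 : ℝ) : ℂ) : ℂ)
      = (Real.pi * x) * Complex.I := by push_cast; ring
    have h3 : (-((Real.pi * x : ℝ) : ℂ)) * Complex.I = -((Real.pi * x) * Complex.I) := by
      push_cast; ring
    rw [h1, h2, h3, Complex.ofReal_mul, Complex.exp_add, Complex.exp_neg]
    have hne := Complex.exp_ne_zero ((Real.pi * x) * Complex.I)
    field_simp
    rw [Complex.I_sq]
    ring
  rw [h, norm_mul, norm_ex, norm_mul, norm_mul, Complex.norm_I, Complex.norm_real]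
  simp

lemma sin_pi_ge (x : ℝ) (h0 : 0 < x) (h1 : x < 1) : 2 * x * (1 - x) ≤ Real.sin (Real.pi * x) := by
  have hp := Real.pi_pos
  rcases le_total x (1 / 2) with h | h
  · have := Real.mul_le_sin (x := Real.pi * x) (by positivity) (by nlinarith)
    have e : 2 / Real.pi * (Real.pi * x) = 2 * x := by field_simp
    nlinarith
  · have := Real.mul_le_sin (x := Real.pi * (1 - x)) (mul_nonneg hp.le (by linarith)) (by nlinarith)
    have e : 2 / Real.pi * (Real.pi * (1 - x)) = 2 * (1 - x) := by field_simp
    have e2 : Real.sin (Real.pi * (1 - x)) = Real.sin (Real.pi * x) := by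
      rw [← Real.sin_pi_sub]; congr 1; ring
    rw [e, e2] at this
    nlinarith

lemma geom_ex_le (x : ℝ) (h0 : 0 < x) (h1 : x < 1) (K : ℕ) :
    ‖∑ w ∈ Finset.range K, ex x ^ w‖ ≤ 1 / (2 * x) + 1 / (2 * (1 - x)) := by
  have hs := sin_pi_ge x h0 h1
  have h1' : 0 < 1 - x := by linarith
  have hpos : 0 < 2 * x * (1 - x) := by positivity
  have hn := norm_ex_sub_one x
  rw [abs_of_pos (by linarith)] at hn
  have hne : ex x ≠ 1 := by
    intro h
    rw [h] at hn
    simp at hn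
    linarith
  rw [geom_sum_eq hne, norm_div, hn]
  have hnum : ‖ex x ^ K - 1‖ ≤ 2 := by
    refine (norm_sub_le _ _).trans ?_
    simp [norm_ex]
    norm_num
  have e : 1 / (2 * x) + 1 / (2 * (1 - x)) = 2 / (2 * (2 * x * (1 - x))) := by
    field_simp
    ring
  rw [e]
  gcongr

lemma sum_geom_le (m K : ℕ) (d : ℝ) (h0 : 0 ≤ d) (h1 : d < 1 / ((m + 2 : ℕ) : ℝ)) :
    ∑ k ∈ Finset.range (m + 2), ‖∑ w ∈ Finset.range K, ex (d + k / ((m + 2 : ℕ) : ℝ)) ^ w‖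
      ≤ 2 * K + (m + 2 : ℕ) * (1 + Real.log (m + 2 : ℕ)) := by
  set q : ℝ := ((m + 2 : ℕ) : ℝ) with hq
  have hqm : q = m + 2 := by rw [hq]; push_cast; ring
  have hq0 : 0 < q := by rw [hqm]; positivity
  rw [Finset.sum_range_succ, Finset.sum_range_succ']
  have A := geom_norm_le _ (norm_ex (d + (0 : ℕ) / q)) K
  have B := geom_norm_le _ (norm_ex (d + (m + 1 : ℕ) / q)) K
  have hh : (harmonic m : ℝ) ≤ 1 + Real.log q := by
    rcases Nat.eq_zero_or_pos m with h | h
    · subst h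
      simp
      have : 0 ≤ Real.log q := Real.log_nonneg (by rw [hqm]; norm_num)
      linarith
    · refine (harmonic_le_one_add_log m).trans ?_
      gcongr
      rw [hqm]; linarith
  have hh' : (harmonic m : ℝ) = ∑ k ∈ Finset.range m, 1 / ((k : ℝ) + 1) := by
    simp [harmonic]
  have C : ∑ k ∈ Finset.range m, ‖∑ w ∈ Finset.range K, ex (d + (k + 1 : ℕ) / q) ^ w‖
      ≤ ∑ k ∈ Finset.range m, (q / 2 * (1 / ((k : ℝ) + 1))
        + q / 2 * (1 / (((m - 1 - k : ℕ) : ℝ) + 1))) := by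
    refine Finset.sum_le_sum fun k hk => ?_
    have hk' := Finset.mem_range.1 hk
    have hkm : (k : ℝ) + 1 ≤ m := by exact_mod_cast hk'
    have hc : ((m - 1 - k : ℕ) : ℝ) + 1 = m - k := by
      have : (m - 1 - k) + 1 + k = m := by omega
      have := congrArg (Nat.cast (R := ℝ)) this
      push_cast at this
      linarith
    have hx0 : ((k : ℝ) + 1) / q ≤ d + (k + 1 : ℕ) / q := by push_cast; linarith
    have hx1 : ((m : ℝ) - k) / q ≤ 1 - (d + (k + 1 : ℕ) / q) := by
      have : ((m : ℝ) - k) / q = 1 - (1 / q + (k + 1) / q) := by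
        field_simp
        rw [hqm]; ring
      rw [this]; push_cast; linarith
    have p0 : 0 < ((k : ℝ) + 1) / q := by positivity
    have hmk : 0 < (m : ℝ) - k := by linarith
    have p1 : 0 < ((m : ℝ) - k) / q := by positivity
    refine (geom_ex_le _ (by linarith) (by linarith) K).trans ?_
    rw [hc]
    have e0 : q / 2 * (1 / ((k : ℝ) + 1)) = 1 / (2 * (((k : ℝ) + 1) / q)) := by field_simp
    have e1 : q / 2 * (1 / ((m : ℝ) - k)) = 1 / (2 * (((m : ℝ) - k) / q)) := by
      field_simp
    rw [e0, e1]
    gcongr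
  rw [Finset.sum_add_distrib, ← Finset.mul_sum, ← Finset.mul_sum,
    Finset.sum_range_reflect (fun k : ℕ => 1 / ((k : ℝ) + 1)), ← hh'] at C
  have D : q * (harmonic m : ℝ) ≤ q * (1 + Real.log q) := by gcongr
  linarith

lemma std_eq_ex (q : ℕ) [NeZero q] (j : ℤ) : ZMod.stdAddChar (j : ZMod q) = ex ((j : ℝ) / q) := by
  rw [ZMod.stdAddChar_coe]
  unfold ex
  congr 1
  push_cast
  ring

lemma sum_zmod_le (q K : ℕ) [NeZero q] (hq : 2 ≤ q) (t : ℝ) :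
    ∑ k : ZMod q, ‖∑ w ∈ Finset.range K, (ex t * ZMod.stdAddChar k) ^ w‖
      ≤ 2 * K + q * (1 + Real.log q) := by
  obtain ⟨m, rfl⟩ : ∃ m, q = m + 2 := ⟨q - 2, by omega⟩
  have hq0 : (0 : ℝ) < ((m + 2 : ℕ) : ℝ) := by positivity
  set j : ℤ := ⌊t * ((m + 2 : ℕ) : ℝ)⌋ with hj
  set d : ℝ := t - j / ((m + 2 : ℕ) : ℝ) with hd
  have h0 : 0 ≤ d := by
    rw [hd, sub_nonneg, div_le_iff₀ hq0]
    exact Int.floor_le _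
  have h1 : d < 1 / ((m + 2 : ℕ) : ℝ) := by
    rw [hd, sub_lt_iff_lt_add, ← add_div, lt_div_iff₀ hq0]
    have := Int.lt_floor_add_one (t * ((m + 2 : ℕ) : ℝ))
    linarith
  refine le_trans (le_of_eq ?_) (sum_geom_le m K d h0 h1)
  have ht : ex t = ex d * ZMod.stdAddChar (j : ZMod (m + 2)) := by
    rw [std_eq_ex, ← ex_add, hd]
    congr 1; ring
  simp_rw [ht, mul_assoc, ← AddChar.map_add_eq_mul]
  refine (Equiv.sum_comp (Equiv.addLeft (j : ZMod (m + 2)))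
    (fun k => ‖∑ w ∈ Finset.range K, (ex d * ZMod.stdAddChar k) ^ w‖)).trans ?_
  rw [← Fin.sum_univ_eq_sum_range
    (fun k : ℕ => ‖∑ w ∈ Finset.range K, ex (d + k / ((m + 2 : ℕ) : ℝ)) ^ w‖)]
  refine Fintype.sum_congr _ _ fun (k : ZMod (m + 2)) => ?_
  have : (ZMod.stdAddChar k : ℂ) = ex ((ZMod.val k : ℝ) / ((m + 2 : ℕ) : ℝ)) := by
    have := std_eq_ex (m + 2) (ZMod.val k : ℤ)
    simpa using this
  rw [this, ← ex_add]
  rfl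

lemma norm_gauss (q : ℕ) [NeZero q] (χ : DirichletCharacter ℂ q) (hχ : χ.IsPrimitive) :
    ‖gaussSum χ ZMod.stdAddChar‖ = Real.sqrt q := by
  have h := congrFun (ZMod.dft_dft (χ : ZMod q → ℂ)) (-1)
  have h1 : gaussSum χ ZMod.stdAddChar * star (gaussSum χ (ZMod.stdAddChar (N := q))) = q := by
    rw [star_gaussSum_eq]
    simp only [neg_neg, map_one, smul_eq_mul, mul_one] at h
    rw [← h, ZMod.dft_apply, gaussSum, gaussSum, Finset.mul_sum]
    rw [← Equiv.sum_comp (Equiv.neg (ZMod q))]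
    refine Finset.sum_congr rfl fun k _ => ?_
    rw [hχ.fourierTransform_eq_inv_mul_gaussSum]
    simp [gaussSum, AddChar.inv_apply]
    ring
  rw [Complex.star_def, Complex.mul_conj, Complex.normSq_eq_norm_sq] at h1
  have h2 : ‖gaussSum χ ZMod.stdAddChar‖ ^ 2 = (q : ℝ) := by exact_mod_cast h1
  rw [← h2, Real.sqrt_sq (norm_nonneg _)]

lemma norm_dft_le (q : ℕ) [NeZero q] (χ : DirichletCharacter ℂ q) (hχ : χ.IsPrimitive)
    (k : ZMod q) : ‖ZMod.dft (χ : ZMod q → ℂ) k‖ ≤ Real.sqrt q := by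
  rw [hχ.fourierTransform_eq_inv_mul_gaussSum, norm_mul, norm_gauss q χ hχ]
  exact mul_le_of_le_one_left (Real.sqrt_nonneg _) (DirichletCharacter.norm_le_one _ _)

lemma chi_expand (q : ℕ) [NeZero q] (χ : DirichletCharacter ℂ q) (x : ZMod q) :
    χ x = (q : ℂ)⁻¹ * ∑ k : ZMod q, ZMod.stdAddChar (k * x) * ZMod.dft (χ : ZMod q → ℂ) k := by
  have := ZMod.invDFT_apply (ZMod.dft (χ : ZMod q → ℂ)) x
  rw [LinearEquiv.symm_apply_apply] at this
  simpa using this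

lemma progression_bound (q : ℕ) (hq : 2 ≤ q) (χ : DirichletCharacter ℂ q) (hχ : χ.IsPrimitive)
    (q₀ : ℕ) (hc : Nat.Coprime q₀ q) (r K : ℕ) (c : ℤ) (ξ : ℝ) :
    ‖∑ w ∈ Finset.range K, ex (ξ * (r + q₀ * w : ℕ)) * χ (((r + q₀ * w : ℕ) + c : ℤ) : ZMod q)‖
      ≤ (q : ℝ)⁻¹ * (Real.sqrt q * (2 * K + q * (1 + Real.log q))) := by
  have : NeZero q := ⟨by omega⟩
  let u : (ZMod q)ˣ := ZMod.unitOfCoprime q₀ hc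
  have hu : (u : ZMod q) = q₀ := ZMod.coe_unitOfCoprime q₀ hc
  have key : ∑ w ∈ Finset.range K,
      ex (ξ * (r + q₀ * w : ℕ)) * χ (((r + q₀ * w : ℕ) + c : ℤ) : ZMod q)
      = (q : ℂ)⁻¹ * ∑ k : ZMod q, (ZMod.dft (χ : ZMod q → ℂ) k * (ex (ξ * r)
        * ZMod.stdAddChar (k * ((r : ZMod q) + (c : ZMod q))))) *
        ∑ w ∈ Finset.range K, (ex (ξ * q₀) * ZMod.stdAddChar ((u : ZMod q) * k)) ^ w := by
    simp_rw [chi_expand q χ, Finset.mul_sum]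
    rw [Finset.sum_comm]
    refine Finset.sum_congr rfl fun k _ => Finset.sum_congr rfl fun w _ => ?_
    have e1 : ex (ξ * (r + q₀ * w : ℕ)) = ex (ξ * r) * ex (ξ * q₀) ^ w := by
      rw [← ex_mul_nat, ← ex_add]
      congr 1; push_cast; ring
    have e2 : ZMod.stdAddChar (k * (((r + q₀ * w : ℕ) + c : ℤ) : ZMod q))
        = ZMod.stdAddChar (k * ((r : ZMod q) + (c : ZMod q))) * ZMod.stdAddChar ((u : ZMod q) * k) ^ w := by
      rw [← AddChar.map_nsmul_eq_pow, ← AddChar.map_add_eq_mul, hu]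
      congr 1; push_cast; rw [nsmul_eq_mul]; ring
    rw [e1, e2, mul_pow]
    ring
  rw [key, norm_mul, norm_inv, Complex.norm_natCast]
  gcongr
  refine (norm_sum_le _ _).trans ?_
  have h2 := sum_zmod_le q K hq (ξ * q₀)
  rw [← Equiv.sum_comp (Units.mulLeft u)] at h2
  refine le_trans ?_ (mul_le_mul_of_nonneg_left h2 (Real.sqrt_nonneg q))
  rw [Finset.mul_sum]
  refine Finset.sum_le_sum fun k _ => ?_
  rw [norm_mul, norm_mul, norm_mul, norm_ex, AddChar.norm_apply]
  simp only [mul_one]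
  gcongr
  · exact norm_dft_le q χ hχ k
  · rfl

open scoped Classical in
lemma filter_eq_image (q₀ : ℕ) (h : 0 < q₀) (a : ℤ) (M : ℕ) : ∃ r K : ℕ,
    (K : ℝ) ≤ M / q₀ + 1 ∧
    (Finset.range M).filter (fun v : ℕ => (v : ℤ) % (q₀ : ℤ) = a % (q₀ : ℤ))
      = (Finset.range K).image (fun w => r + q₀ * w) := by
  have hz : (0 : ℤ) < q₀ := by exact_mod_cast h
  have hr0 := Int.emod_nonneg a hz.ne'
  have hr1 := Int.emod_lt_of_pos a hz
  obtain ⟨r, hr⟩ := Int.eq_ofNat_of_zero_le hr0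
  rw [hr] at hr1
  have hrq : r < q₀ := by exact_mod_cast hr1
  refine ⟨r, (M + (q₀ - 1 - r)) / q₀, ?_, ?_⟩
  · refine Nat.cast_div_le.trans ?_
    have hq : (0 : ℝ) < q₀ := by exact_mod_cast h
    rw [div_le_iff₀ hq, add_mul, div_mul_cancel₀ _ hq.ne', one_mul]
    have : M + (q₀ - 1 - r) ≤ M + q₀ := by omega
    exact_mod_cast this
  · have hK : ∀ w, w < (M + (q₀ - 1 - r)) / q₀ ↔ r + q₀ * w < M := by
      intro w
      rw [← Nat.succ_le_iff, Nat.le_div_iff_mul_le h, Nat.succ_mul, mul_comm w]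
      omega
    ext v
    simp only [Finset.mem_filter, Finset.mem_range, Finset.mem_image, hr, hK]
    have hv : ((v : ℤ) % (q₀ : ℤ) = (r : ℤ)) ↔ v % q₀ = r := by exact_mod_cast Iff.rfl
    rw [hv]
    constructor
    · rintro ⟨h1, h2⟩
      have := Nat.mod_add_div v q₀
      rw [h2] at this
      exact ⟨v / q₀, by omega, this⟩
    · rintro ⟨w, h1, rfl⟩
      exact ⟨h1, by rw [Nat.add_mul_mod_self_left, Nat.mod_eq_of_lt hrq]⟩



open scoped Classical in
/-- Incomplete character sum bound via Gauss sums (used for (5.6)): for `χ` primitive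
modulo `q ≥ 2` and `q₀` coprime to `q`,
`|∑_{0 ≤ v < M, v ≡ a (mod q₀)} e(ξ v) χ(v + c)| ≤ C (1 + M/(q₀ q)) √q log q`. -/
theorem incomplete_character_sum_bound :
    ∃ C : ℝ, 0 < C ∧ ∀ q : ℕ, 2 ≤ q →
      ∀ χ : DirichletCharacter ℂ q, χ.IsPrimitive →
      ∀ q₀ : ℕ, 0 < q₀ → Nat.Coprime q₀ q →
      ∀ a c : ℤ, ∀ ξ : ℝ, ∀ M : ℕ, 1 ≤ M →
      norm (∑ v ∈ (Finset.range M).filter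
            (fun v : ℕ => (v : ℤ) % (q₀ : ℤ) = a % (q₀ : ℤ)),
          Complex.exp (2 * Real.pi * Complex.I * ξ * v) * χ (((v : ℤ) + c : ℤ) : ZMod q))
        ≤ C * (1 + (M : ℝ) / ((q₀ : ℝ) * q)) * Real.sqrt q * Real.log q := by
  refine ⟨6, by norm_num, ?_⟩
  intro q hq χ hχ q₀ h0 hc a c ξ M _
  obtain ⟨r, K, hK, hf⟩ := filter_eq_image q₀ h0 a M
  have hinj : Set.InjOn (fun w => r + q₀ * w) (Finset.range K : Set ℕ) := by
    intro x _ y _ hxy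
    exact Nat.eq_of_mul_eq_mul_left h0 (Nat.add_left_cancel hxy)
  rw [hf, Finset.sum_image hinj]
  have hb := progression_bound q hq χ hχ q₀ hc r K c ξ
  have heq : ∑ w ∈ Finset.range K,
      ex (ξ * (r + q₀ * w : ℕ)) * χ (((r + q₀ * w : ℕ) + c : ℤ) : ZMod q)
      = ∑ w ∈ Finset.range K, Complex.exp (2 * Real.pi * Complex.I * ξ * (r + q₀ * w : ℕ))
        * χ (((r + q₀ * w : ℕ) + c : ℤ) : ZMod q) := by
    refine Finset.sum_congr rfl fun w _ => ?_
    unfold ex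
    congr 2
    push_cast
    ring
  rw [heq] at hb
  refine hb.trans ?_
  have hq' : (2 : ℝ) ≤ q := by exact_mod_cast hq
  have hqp : (0 : ℝ) < q := by linarith
  have h0' : (0 : ℝ) < q₀ := by exact_mod_cast h0
  have hlog : (0.69 : ℝ) ≤ Real.log q := by
    have := Real.log_two_gt_d9
    have := Real.log_le_log (by norm_num) hq'
    linarith
  set X : ℝ := 1 + (M : ℝ) / ((q₀ : ℝ) * q) with hX
  have hX1 : 1 ≤ X := by
    have : 0 ≤ (M : ℝ) / ((q₀ : ℝ) * q) := by positivity
    linarith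
  have hKX : (K : ℝ) ≤ q * X := by
    have : (q : ℝ) * X = q + M / q₀ := by rw [hX]; field_simp
    rw [this]; linarith
  have hs : 0 ≤ Real.sqrt q := Real.sqrt_nonneg _
  have h1 : 2 * (K : ℝ) + q * (1 + Real.log q) ≤ q * (6 * X * Real.log q) := by
    have a1 : 1 + Real.log q ≤ X * (1 + Real.log q) := le_mul_of_one_le_left (by linarith) hX1
    have a2 : X * 3 ≤ X * (5 * Real.log q) := mul_le_mul_of_nonneg_left (by linarith) (by linarith)
    have a3 : 2 * X + (1 + Real.log q) ≤ 6 * X * Real.log q := by linarith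
    have := mul_le_mul_of_nonneg_left a3 hqp.le
    linarith
  calc (q : ℝ)⁻¹ * (Real.sqrt q * (2 * K + q * (1 + Real.log q)))
      ≤ (q : ℝ)⁻¹ * (Real.sqrt q * (q * (6 * X * Real.log q))) := by gcongr
    _ = 6 * X * Real.sqrt q * Real.log q := by field_simp
end

section
/- There is an absolute constant C such that the following holds. Let q ≥ 1 be an integer, χ a Dirichlet character modulo q, and let T ≥ 2 and x ≥ 2 be reals with (qT)^{20} ≤ x. Let Z be the set of zeros ρ of the Dirichlet L-function L(s, χ) with 1/2 ≤ Re ρ < 1 and |Im ρ| ≤ T. Assume that for every α ∈ [1/2, 1] the number of ρ ∈ Z with Re ρ ≥ α is at most (qT)^{8(1−α)}, and let η be a real with 0 < η ≤ 1/2 such that Re ρ ≤ 1 − η for every ρ ∈ Z. Then ∑_{ρ ∈ Z} x^{Re ρ − 1} ≤ C x^{−η/2}. -/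
open scoped Classical in
/-- Ordering a finite set by decreasing `f`, the `k`-th element contributes at most `b k`. -/
lemma rank_sum_le (f g : ℂ → ℝ) (b : ℕ → ℝ) (hb : Antitone b) (Z : Finset ℂ) :
    (∀ ρ ∈ Z, g ρ ≤ b ((Z.filter (fun w => f ρ ≤ f w)).card - 1)) →
      ∑ ρ ∈ Z, g ρ ≤ ∑ k ∈ Finset.range Z.card, b k := by
  induction Z using Finset.induction_on_min_value f with
  | empty => simp
  | insert a s ha hmin ih =>
    intro h
    rw [Finset.sum_insert ha, Finset.card_insert_of_notMem ha, Finset.sum_range_succ, add_comm]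
    apply add_le_add
    · apply ih
      intro ρ hρ
      refine (h ρ (Finset.mem_insert_of_mem hρ)).trans (hb ?_)
      apply Nat.sub_le_sub_right
      exact Finset.card_le_card (Finset.filter_subset_filter _ (Finset.subset_insert a s))
    · have h1 := h a (Finset.mem_insert_self a s)
      rw [Finset.filter_true_of_mem, Finset.card_insert_of_notMem ha] at h1
      · simpa using h1
      · intro w hw
        rcases Finset.mem_insert.1 hw with rfl | hw
        · exact le_rfl
        · exact hmin w hw

open scoped Classical in
/-- The zero-density estimate implies the bound (6.5):
if the zeros `ρ` of `L(s, χ)` with `1/2 ≤ Re ρ < 1`, `|Im ρ| ≤ T` satisfy the density bound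
`N(α) ≤ (qT)^{8(1-α)}` and all have `Re ρ ≤ 1 - η`, then
`∑_ρ x^{Re ρ - 1} ≤ C x^{-η/2}` whenever `(qT)^{20} ≤ x`. -/
theorem zero_density_sum_bound :
    ∃ C : ℝ, 0 < C ∧ ∀ q : ℕ, 1 ≤ q → ∀ _ : NeZero q,
      ∀ χ : DirichletCharacter ℂ q,
      ∀ T x : ℝ, 2 ≤ T → 2 ≤ x → ((q : ℝ) * T) ^ (20 : ℕ) ≤ x →
      ∀ Z : Finset ℂ,
      (∀ ρ : ℂ, ρ ∈ Z ↔ DirichletCharacter.LFunction χ ρ = 0 ∧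
          1 / 2 ≤ ρ.re ∧ ρ.re < 1 ∧ |ρ.im| ≤ T) →
      (∀ α : ℝ, 1 / 2 ≤ α → α ≤ 1 →
        ((Z.filter (fun ρ => α ≤ ρ.re)).card : ℝ) ≤ ((q : ℝ) * T) ^ (8 * (1 - α))) →
      ∀ η : ℝ, 0 < η → η ≤ 1 / 2 → (∀ ρ ∈ Z, ρ.re ≤ 1 - η) →
      ∑ ρ ∈ Z, x ^ (ρ.re - 1) ≤ C * x ^ (-η / 2) := by
  have hb : Antitone (fun k : ℕ => ((k : ℝ) + 1) ^ (-(5 / 4) : ℝ)) := by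
    intro m n hmn
    have : (m : ℝ) ≤ n := by exact_mod_cast hmn
    exact Real.rpow_le_rpow_of_nonpos (by positivity) (by linarith) (by norm_num)
  have hs : Summable (fun k : ℕ => ((k : ℝ) + 1) ^ (-(5 / 4) : ℝ)) := by
    have h0 : Summable (fun k : ℕ => (k : ℝ) ^ (-(5 / 4) : ℝ)) :=
      Real.summable_nat_rpow.2 (by norm_num)
    have := (summable_nat_add_iff 1).2 h0
    simpa using this
  have hnn : ∀ k : ℕ, 0 ≤ ((k : ℝ) + 1) ^ (-(5 / 4) : ℝ) := fun k => by positivity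
  refine ⟨(∑' k : ℕ, ((k : ℝ) + 1) ^ (-(5 / 4) : ℝ)) + 1, ?_, ?_⟩
  · have : 0 ≤ ∑' k : ℕ, ((k : ℝ) + 1) ^ (-(5 / 4) : ℝ) := tsum_nonneg hnn
    linarith
  intro q hq _ χ T x hT hx hqx Z hZ hN η hη hη' hZη
  have hx0 : 0 < x := by linarith
  have hq1 : (1 : ℝ) ≤ q := by exact_mod_cast hq
  have hy : 0 < (q : ℝ) * T := by nlinarith
  have key : ∑ ρ ∈ Z, x ^ ((ρ.re - 1) / 2) ≤
      ∑ k ∈ Finset.range Z.card, ((k : ℝ) + 1) ^ (-(5 / 4) : ℝ) := by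
    apply rank_sum_le Complex.re (fun ρ => x ^ ((ρ.re - 1) / 2)) _ hb Z
    intro ρ hρ
    obtain ⟨-, h1, h2, -⟩ := (hZ ρ).1 hρ
    have hc := hN ρ.re h1 h2.le
    set n := (Z.filter (fun w => ρ.re ≤ w.re)).card with hn
    have hn1 : 1 ≤ n := Finset.card_pos.2 ⟨ρ, by simp [hρ]⟩
    have hcast : ((n - 1 : ℕ) : ℝ) + 1 = n := by
      rw [Nat.cast_sub hn1]; simp
    have hn0 : (0 : ℝ) < n := by exact_mod_cast hn1
    have h3 : ((q : ℝ) * T) ^ (8 * (1 - ρ.re)) ≤ x ^ (2 / 5 * (1 - ρ.re)) := by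
      have e : ((q : ℝ) * T) ^ (8 * (1 - ρ.re)) =
          (((q : ℝ) * T) ^ (20 : ℕ)) ^ (2 / 5 * (1 - ρ.re)) := by
        rw [← Real.rpow_natCast, ← Real.rpow_mul hy.le]
        congr 1
        push_cast
        ring
      rw [e]
      exact Real.rpow_le_rpow (by positivity) hqx (by linarith)
    show x ^ ((ρ.re - 1) / 2) ≤ (((n - 1 : ℕ) : ℝ) + 1) ^ (-(5 / 4) : ℝ)
    rw [hcast]
    have h4 := Real.rpow_le_rpow_of_nonpos hn0 (hc.trans h3)
      (show (-(5 / 4) : ℝ) ≤ 0 by norm_num)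
    rw [← Real.rpow_mul hx0.le] at h4
    convert h4 using 2
    ring
  have h5 : ∑ ρ ∈ Z, x ^ (ρ.re - 1) ≤ (∑ ρ ∈ Z, x ^ ((ρ.re - 1) / 2)) * x ^ (-η / 2) := by
    rw [Finset.sum_mul]
    apply Finset.sum_le_sum
    intro ρ hρ
    rw [← Real.rpow_add hx0]
    have := hZη ρ hρ
    exact Real.rpow_le_rpow_of_exponent_le (by linarith) (by linarith)
  refine h5.trans (mul_le_mul_of_nonneg_right ?_ (by positivity))
  have := hs.sum_le_tsum (Finset.range Z.card) (fun k _ => hnn k)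
  linarith
end

section
/- Let q₁ and q₂ be coprime positive integers with q₂ squarefree, set q = q₁ q₂, let χ₁ be a primitive Dirichlet character modulo q₁, and let χ be the Dirichlet character modulo q induced by χ₁ (so χ(a) = χ₁(a) when gcd(a, q) = 1 and χ(a) = 0 otherwise). Then for every integer k: (τ(χ̄)/φ(q)) · ∑_{a=1}^{q} χ(a) e^{−2πi a k/q} = (q₁/φ(q₁)) · μ(gcd(q₂, k)) · χ̄₁(k) / φ(q₂/gcd(q₂, k)), where for a Dirichlet character ψ modulo Q the Gauss sum is τ(ψ) = ∑_{m=1}^{Q} ψ(m) e^{2πi m/Q}. -/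
/-- `e(x) = e^{2πix}`. -/
noncomputable def eexp (x : ℝ) : ℂ := Complex.exp (2 * Real.pi * Complex.I * x)

lemma one_app_nat (n a : ℕ) :
    (1 : DirichletCharacter ℂ n) (a : ZMod n) = if Nat.Coprime a n then 1 else 0 := by
  split_ifs with h
  · exact MulChar.one_apply ((ZMod.isUnit_iff_coprime a n).mpr h)
  · exact MulChar.map_nonunit _ (by rwa [ZMod.isUnit_iff_coprime])

open ZMod in
/-- Twisted Gauss sum. -/
noncomputable def tw {n : ℕ} [NeZero n] (χ : DirichletCharacter ℂ n) (k : ℤ) : ℂ :=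
  ∑ a : ZMod n, χ a * stdAddChar (a * (k : ZMod n))

open ZMod in
lemma tw_crt {m n : ℕ} [NeZero m] [NeZero n] [NeZero (m * n)] (h : m.Coprime n)
    (χ : DirichletCharacter ℂ m) (ψ : DirichletCharacter ℂ n) (k : ℤ) :
    ∑ x : ZMod (m * n), χ (x.cast : ZMod m) * ψ (x.cast : ZMod n) *
        stdAddChar (x * (k : ZMod (m * n)))
      = χ (n : ZMod m) * ψ (m : ZMod n) * (tw χ k * tw ψ k) := by
  have hm : (m : ℂ) ≠ 0 := Nat.cast_ne_zero.mpr (NeZero.ne m)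
  have hn : (n : ℂ) ≠ 0 := Nat.cast_ne_zero.mpr (NeZero.ne n)
  let f : ZMod m × ZMod n → ZMod (m * n) := fun p => ((n * p.1.val + m * p.2.val : ℤ) : ZMod (m * n))
  have h1 : ∀ p, ((f p).cast : ZMod m) = n * p.1 := by
    intro p
    simp only [f]
    rw [ZMod.cast_intCast (Nat.dvd_mul_right m n)]
    push_cast
    simp
  have h2 : ∀ p, ((f p).cast : ZMod n) = m * p.2 := by
    intro p
    simp only [f]
    rw [ZMod.cast_intCast (Nat.dvd_mul_left n m)]
    push_cast
    simp
  have hf : Function.Bijective f := by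
    rw [Fintype.bijective_iff_injective_and_card]
    constructor
    · intro p p' hp
      have e1 := h1 p
      have e2 := h2 p
      rw [hp, h1] at e1
      rw [hp, h2] at e2
      have u1 : IsUnit (n : ZMod m) := (ZMod.isUnit_iff_coprime n m).mpr h.symm
      have u2 : IsUnit (m : ZMod n) := (ZMod.isUnit_iff_coprime m n).mpr h
      exact Prod.ext (u1.mul_left_cancel e1).symm (u2.mul_left_cancel e2).symm
    · simp [ZMod.card]
  rw [← hf.sum_comp, Fintype.sum_prod_type, tw, tw, Finset.sum_mul_sum, Finset.mul_sum]
  refine Finset.sum_congr rfl fun a _ => ?_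
  rw [Finset.mul_sum]
  refine Finset.sum_congr rfl fun b _ => ?_
  rw [h1, h2]
  have e : (stdAddChar (f (a, b) * (k : ZMod (m * n))) : ℂ)
      = stdAddChar (a * (k : ZMod m)) * stdAddChar (b * (k : ZMod n)) := by
    have ea : a * (k : ZMod m) = ((a.val * k : ℤ) : ZMod m) := by push_cast; simp
    have eb : b * (k : ZMod n) = ((b.val * k : ℤ) : ZMod n) := by push_cast; simp
    have ef : f (a, b) * (k : ZMod (m * n))
      = (((n * a.val + m * b.val) * k : ℤ) : ZMod (m * n)) := by simp [f]
    rw [ea, eb, ef, stdAddChar_coe, stdAddChar_coe, stdAddChar_coe, ← Complex.exp_add]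
    congr 1
    push_cast
    field_simp
  rw [e, map_mul, map_mul]
  ring

open ZMod in
lemma tw_prim {n : ℕ} [NeZero n] (χ : DirichletCharacter ℂ n) (h : χ.IsPrimitive) (k : ℤ) :
    tw χ k = χ⁻¹ (k : ZMod n) * tw χ 1 := by
  have := gaussSum_mulShift_of_isPrimitive (stdAddChar (N := n)) h (k : ZMod n)
  simpa [gaussSum, tw, AddChar.mulShift_apply, mul_comm] using this

open ZMod in
lemma tw_neg_one {n : ℕ} [NeZero n] (χ : DirichletCharacter ℂ n) :
    tw χ (-1) = χ (-1) * tw χ 1 := by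
  simp only [tw]
  rw [← Equiv.sum_comp (Equiv.neg (ZMod n)), Finset.mul_sum]
  refine Finset.sum_congr rfl fun a _ => ?_
  rw [← mul_assoc, ← map_mul]
  simp

open ZMod in
open scoped FourierTransform in
lemma tw_mul {n : ℕ} [NeZero n] (χ : DirichletCharacter ℂ n) (h : χ.IsPrimitive) :
    tw χ 1 * tw χ⁻¹ (-1) = n := by
  have h1 := congrFun (ZMod.dft_dft (χ : ZMod n → ℂ)) (-1)
  have h2 : ZMod.dft (χ : ZMod n → ℂ) = fun k => tw χ 1 * χ⁻¹ (-k) := by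
    ext k
    rw [h.fourierTransform_eq_inv_mul_gaussSum, mul_comm]
    simp [gaussSum, tw]
  rw [h2, ZMod.dft_const_mul, ZMod.dft_comp_neg (fun k => χ⁻¹ k)] at h1
  simp only [ZMod.dft_apply] at h1
  simp only [neg_neg, map_one, smul_eq_mul, mul_one] at h1
  rw [← h1, tw]
  congr 1
  refine Finset.sum_congr rfl fun a _ => ?_
  rw [mul_comm]
  simp

open ZMod in
lemma tw_one_mul {m n : ℕ} [NeZero m] [NeZero n] [NeZero (m * n)] (h : m.Coprime n) (k : ℤ) :
    tw (1 : DirichletCharacter ℂ (m * n)) k =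
      tw (1 : DirichletCharacter ℂ m) k * tw (1 : DirichletCharacter ℂ n) k := by
  have := tw_crt h 1 1 k
  have u1 : IsUnit (n : ZMod m) := (ZMod.isUnit_iff_coprime n m).mpr h.symm
  have u2 : IsUnit (m : ZMod n) := (ZMod.isUnit_iff_coprime m n).mpr h
  rw [MulChar.one_apply u1, MulChar.one_apply u2, one_mul, one_mul] at this
  rw [← this, tw]
  refine Finset.sum_congr rfl fun x _ => ?_
  congr 1
  obtain ⟨x, rfl⟩ := ZMod.natCast_zmod_surjective x
  rw [ZMod.cast_natCast (Nat.dvd_mul_right m n), ZMod.cast_natCast (Nat.dvd_mul_left n m)]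
  simp only [one_app_nat, Nat.coprime_mul_iff_right]
  split_ifs <;> simp_all

open ZMod in
lemma tw_one_prime {p : ℕ} [NeZero p] (hp : p.Prime) (k : ℤ) :
    tw (1 : DirichletCharacter ℂ p) k = if (p : ℤ) ∣ k then (p : ℂ) - 1 else -1 := by
  have := Fact.mk hp
  have hs := AddChar.sum_mulShift (k : ZMod p) (ZMod.isPrimitive_stdAddChar p)
  rw [← Finset.add_sum_erase _ _ (Finset.mem_univ (0 : ZMod p))] at hs
  have : tw (1 : DirichletCharacter ℂ p) k
      = ∑ x ∈ Finset.univ.erase (0 : ZMod p), stdAddChar (x * (k : ZMod p)) := by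
    rw [tw, ← Finset.add_sum_erase _ _ (Finset.mem_univ (0 : ZMod p))]
    rw [MulChar.map_zero, zero_mul, zero_add]
    refine Finset.sum_congr rfl fun x hx => ?_
    rw [MulChar.one_apply (Finset.ne_of_mem_erase hx).isUnit, one_mul]
  rw [this]
  simp only [← ZMod.intCast_zmod_eq_zero_iff_dvd]
  simp only [zero_mul, AddChar.map_zero_eq_one, ZMod.card] at hs
  split_ifs at hs ⊢ <;> push_cast at hs <;> linear_combination hs

open ArithmeticFunction in
lemma ram (n : ℕ) : ∀ [NeZero n], Squarefree n → ∀ k : ℤ,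
    tw (1 : DirichletCharacter ℂ n) 1 * tw (1 : DirichletCharacter ℂ n) k *
      (Nat.totient (n / Int.gcd n k) : ℂ) = ((moebius (Int.gcd n k) : ℤ) : ℂ) * Nat.totient n := by
  induction n using Nat.recOnPosPrimePosCoprime with
  | zero => intro h; exact absurd rfl h.ne
  | one => 
    intro _ _ k
    have : ∀ k, tw (1 : DirichletCharacter ℂ 1) k = 1 := by
      intro k
      rw [tw, Fintype.sum_subsingleton _ (0 : ZMod 1)]
      rw [MulChar.one_apply (isUnit_of_subsingleton _)]
      simp
    simp [this]
  | prime_pow p j hp hj =>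
    intro _ hs k
    have : j = 1 := by
      by_contra hne
      have := (Nat.squarefree_pow_iff hp.ne_one hj.ne').mp hs
      exact hne this.2
    subst this
    have key : ∀ r : ℕ, r = p → ∀ [NeZero r], tw (1 : DirichletCharacter ℂ r) 1 *
        tw (1 : DirichletCharacter ℂ r) k * (Nat.totient (r / Int.gcd r k) : ℂ)
        = ((moebius (Int.gcd r k) : ℤ) : ℂ) * Nat.totient r := by
      rintro r rfl _
      rw [tw_one_prime hp, tw_one_prime hp]
      have h1 : ¬ ((r : ℤ) ∣ 1) := by
        intro h
        exact hp.one_lt.ne' (by exact_mod_cast Int.eq_one_of_dvd_one (by positivity) h)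
      rw [if_neg h1]
      split_ifs with h
      · have : Int.gcd r k = r := by
          simpa [Int.gcd_def] using Nat.gcd_eq_left (Int.natCast_dvd.mp h)
        rw [this, Nat.div_self hp.pos, moebius_apply_prime hp, Nat.totient_prime hp,
          Nat.cast_sub hp.one_lt.le]
        simp
      · have : Int.gcd r k = 1 := by
          rw [← Int.isCoprime_iff_gcd_eq_one]
          exact (Nat.prime_iff_prime_int.mp hp).irreducible.coprime_iff_not_dvd.mpr h
        rw [this]
        simp
    exact key _ (pow_one p)
  | coprime a b ha hb hab iha ihb =>
    intro _ hs k
    have : NeZero a := ⟨by omega⟩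
    have : NeZero b := ⟨by omega⟩
    have iha := iha (hs.of_mul_left) k
    have ihb := ihb (hs.of_mul_right) k
    have hg : Int.gcd ((a * b : ℕ) : ℤ) k = Int.gcd a k * Int.gcd b k := by
      simp only [Int.gcd_def, Int.natAbs_natCast]
      rw [Nat.gcd_comm, Nat.Coprime.gcd_mul _ hab, Nat.gcd_comm, Nat.gcd_comm _ b]
    have da : Int.gcd a k ∣ a := by simpa [Int.gcd_def] using Nat.gcd_dvd_left a k.natAbs
    have db : Int.gcd b k ∣ b := by simpa [Int.gcd_def] using Nat.gcd_dvd_left b k.natAbs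
    have hgc : Nat.Coprime (Int.gcd a k) (Int.gcd b k) :=
      (hab.coprime_dvd_left da).coprime_dvd_right db
    have hqc : Nat.Coprime (a / Int.gcd a k) (b / Int.gcd b k) :=
      (hab.coprime_dvd_left (Nat.div_dvd_of_dvd da)).coprime_dvd_right (Nat.div_dvd_of_dvd db)
    rw [hg, ← Nat.div_mul_div_comm da db, Nat.totient_mul hqc, Nat.totient_mul hab,
      isMultiplicative_moebius.map_mul_of_coprime hgc, tw_one_mul hab, tw_one_mul hab]
    push_cast
    linear_combination (tw (1 : DirichletCharacter ℂ b) 1 * tw (1 : DirichletCharacter ℂ b) k *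
      (Nat.totient (b / Int.gcd b k) : ℂ)) * iha +
      ((moebius (Int.gcd a k) : ℤ) : ℂ) * Nat.totient a * ihb

lemma sum_Icc_zmod (q : ℕ) [NeZero q] (F : ZMod q → ℂ) :
    ∑ a ∈ Finset.Icc 1 q, F (a : ZMod q) = ∑ x : ZMod q, F x := by
  refine Finset.sum_bij (fun a _ => (a : ZMod q)) (fun _ _ => Finset.mem_univ _) ?_ ?_
    (fun _ _ => rfl)
  · intro a ha b hb hab
    rw [Finset.mem_Icc] at ha hb
    rw [ZMod.natCast_eq_natCast_iff] at hab
    have h1 : ((q : ℤ)) ∣ b - a := hab.dvd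
    have := Int.eq_zero_of_abs_lt_dvd h1 (by rw [abs_lt]; omega)
    omega
  · intro x _
    by_cases hx : x = 0
    · exact ⟨q, by simp [Nat.one_le_iff_ne_zero, NeZero.ne q], by simp [hx]⟩
    · refine ⟨x.val, ?_, by simp⟩
      rw [Finset.mem_Icc]
      exact ⟨Nat.one_le_iff_ne_zero.mpr (by simpa using hx), x.val_lt.le⟩

open ZMod in
lemma sum_conv (q₁ q₂ : ℕ) [NeZero q₁] [NeZero q₂] [NeZero (q₁ * q₂)] (hco : Nat.Coprime q₁ q₂)
    (χ₁ : DirichletCharacter ℂ q₁) (k : ℤ) :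
    ∑ a ∈ Finset.Icc 1 (q₁ * q₂), (if Int.gcd a (q₁ * q₂ : ℕ) = 1 then χ₁ ((a : ℤ) : ZMod q₁) else 0) *
      eexp ((a : ℝ) * k / (q₁ * q₂ : ℕ)) =
    χ₁ (q₂ : ZMod q₁) * (tw χ₁ k * tw (1 : DirichletCharacter ℂ q₂) k) := by
  have := tw_crt hco χ₁ 1 k
  have u2 : IsUnit (q₁ : ZMod q₂) := (ZMod.isUnit_iff_coprime q₁ q₂).mpr hco
  rw [MulChar.one_apply u2, mul_one] at this
  rw [← this, ← sum_Icc_zmod]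
  refine Finset.sum_congr rfl fun a _ => ?_
  rw [ZMod.cast_natCast (Nat.dvd_mul_right _ _), ZMod.cast_natCast (Nat.dvd_mul_left _ _)]
  congr 1
  · simp only [one_app_nat, Int.gcd_natCast_natCast]
    simp only [← Nat.coprime_iff_gcd_eq_one, Nat.coprime_mul_iff_right]
    by_cases h1 : Nat.Coprime a q₁
    · by_cases h2 : Nat.Coprime a q₂
      · rw [if_pos ⟨h1, h2⟩, if_pos h2]
        simp
      · rw [if_neg (fun h => h2 h.2), if_neg h2, mul_zero]
    · rw [MulChar.map_nonunit χ₁ (a := (a : ZMod q₁)) (by rwa [ZMod.isUnit_iff_coprime])]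
      simp [h1]
  · have : (a : ZMod (q₁ * q₂)) * (k : ZMod (q₁ * q₂)) = ((a * k : ℤ) : ZMod (q₁ * q₂)) := by
      push_cast; rfl
    rw [this, stdAddChar_coe, eexp]
    congr 1
    push_cast
    ring

open ArithmeticFunction in
/-- The Gauss sum identity (3.5): for `χ` the character modulo `q = q₁ q₂` (with `q₂`
squarefree coprime to `q₁`) induced by a primitive character `χ₁` modulo `q₁`, and any
integer `k`,
`(τ(χ̄)/φ(q)) ∑_{a=1}^{q} χ(a) e(-ak/q)
  = (q₁/φ(q₁)) μ((q₂,k)) χ̄₁(k) / φ(q₂/(q₂,k))`. -/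
theorem gauss_sum_identity (q₁ q₂ : ℕ) (hq₁ : 0 < q₁) (hq₂ : 0 < q₂)
    (hco : Nat.Coprime q₁ q₂) (hsf : Squarefree q₂) (q : ℕ) (hq : q = q₁ * q₂)
    (χ₁ : DirichletCharacter ℂ q₁) (hχ₁ : χ₁.IsPrimitive)
    (χ : ℤ → ℂ) (hχ : ∀ a : ℤ, χ a = if Int.gcd a q = 1 then χ₁ (a : ZMod q₁) else 0)
    (k : ℤ) :
    ((∑ m ∈ Finset.Icc 1 q, (starRingEnd ℂ) (χ m) * eexp ((m : ℝ) / q)) /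
        (Nat.totient q : ℂ)) *
      (∑ a ∈ Finset.Icc 1 q, χ a * eexp (-((a : ℝ) * k / q)))
    = ((q₁ : ℂ) / (Nat.totient q₁ : ℂ)) *
        ((moebius (Int.gcd (q₂ : ℤ) k) : ℤ) : ℂ) *
        (starRingEnd ℂ) (χ₁ (k : ZMod q₁)) /
        (Nat.totient (q₂ / Int.gcd (q₂ : ℤ) k) : ℂ) := by
  have : NeZero q₁ := ⟨hq₁.ne'⟩
  have : NeZero q₂ := ⟨hq₂.ne'⟩
  have : NeZero (q₁ * q₂) := ⟨(Nat.mul_pos hq₁ hq₂).ne'⟩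
  subst hq
  have s1 := sum_conv q₁ q₂ hco χ₁⁻¹ 1
  have s2 := sum_conv q₁ q₂ hco χ₁ (-k)
  have e1 : (∑ m ∈ Finset.Icc 1 (q₁ * q₂), (starRingEnd ℂ) (χ m) *
      eexp ((m : ℝ) / (q₁ * q₂ : ℕ))) =
      χ₁⁻¹ (q₂ : ZMod q₁) * (tw χ₁⁻¹ 1 * tw (1 : DirichletCharacter ℂ q₂) 1) := by
    rw [← s1]
    refine Finset.sum_congr rfl fun a _ => ?_
    rw [hχ]
    congr 1
    · rw [← MulChar.star_apply', apply_ite (starRingEnd ℂ), _root_.map_zero]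
      rfl
    · simp
  have e2 : (∑ a ∈ Finset.Icc 1 (q₁ * q₂), χ a * eexp (-((a : ℝ) * k / (q₁ * q₂ : ℕ)))) =
      χ₁ (q₂ : ZMod q₁) * (tw χ₁ (-k) * tw (1 : DirichletCharacter ℂ q₂) (-k)) := by
    rw [← s2]
    refine Finset.sum_congr rfl fun a _ => ?_
    rw [hχ]
    congr 2
    push_cast
    ring
  have u1 : IsUnit (q₂ : ZMod q₁) := (ZMod.isUnit_iff_coprime q₂ q₁).mpr hco.symm
  have hc : χ₁⁻¹ (q₂ : ZMod q₁) * χ₁ (q₂ : ZMod q₁) = 1 := by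
    rw [← MulChar.mul_apply, inv_mul_cancel, MulChar.one_apply u1]
  have hr := ram q₂ hsf (-k)
  rw [Int.gcd_neg] at hr
  have hm := tw_mul χ₁ hχ₁
  rw [tw_neg_one] at hm
  have hp := tw_prim χ₁ hχ₁ (-k)
  have hk : χ₁⁻¹ ((-k : ℤ) : ZMod q₁) = χ₁⁻¹ (-1) * (starRingEnd ℂ) (χ₁ (k : ZMod q₁)) := by
    have : (starRingEnd ℂ) (χ₁ (k : ZMod q₁)) = χ₁⁻¹ (k : ZMod q₁) := MulChar.star_apply' _ _
    rw [this, ← map_mul]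
    simp
  rw [hk] at hp
  have t1 : (Nat.totient q₁ : ℂ) ≠ 0 := by exact_mod_cast (Nat.totient_pos.mpr hq₁).ne'
  have t2 : (Nat.totient q₂ : ℂ) ≠ 0 := by exact_mod_cast (Nat.totient_pos.mpr hq₂).ne'
  have dg : Int.gcd q₂ k ∣ q₂ := by simpa [Int.gcd_def] using Nat.gcd_dvd_left q₂ k.natAbs
  have t3 : (Nat.totient (q₂ / Int.gcd (q₂ : ℤ) k) : ℂ) ≠ 0 := by
    exact_mod_cast (Nat.totient_pos.mpr (Nat.div_pos (Nat.le_of_dvd hq₂ dg)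
      (Nat.pos_of_dvd_of_pos dg hq₂))).ne'
  rw [e1, e2, hp, Nat.totient_mul hco]
  push_cast
  generalize tw χ₁⁻¹ 1 = A at *
  generalize tw χ₁ 1 = B at *
  generalize tw (1 : DirichletCharacter ℂ q₂) 1 = C at *
  generalize tw (1 : DirichletCharacter ℂ q₂) (-k) = D at *
  generalize (starRingEnd ℂ) (χ₁ (k : ZMod q₁)) = K at *
  generalize χ₁⁻¹ (q₂ : ZMod q₁) = X at *
  generalize χ₁ (q₂ : ZMod q₁) = Y at *
  generalize χ₁⁻¹ (-1) = Z at *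
  generalize (Nat.totient (q₂ / Int.gcd (q₂ : ℤ) k) : ℂ) = P at *
  generalize ((moebius (Int.gcd (q₂ : ℤ) k) : ℤ) : ℂ) = M at *
  rw [← hm]
  field_simp
  linear_combination (A * B * C * D * K * Z * P) * hc + (A * B * K * Z) * hr
end
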